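/- For every n ≥ 3, the covering type of the special unitary group SU(n) satisfies ct(SU(n)) ≥ (4n³ − 3n² + 5n + 6)/6; that is, for every topological space Y homotopy equivalent to SU(n) and every good cover U of Y, U has at least (4n³ − 3n² + 5n + 6)/6 members. -/

import Mathlib

/-- A good cover of `Y`: a finite family of open subsets covering `Y` such that every
nonempty intersection of (finitely many) members is contractible. -/
def IsGoodCover {Y : Type*} [TopologicalSpace Y] (U : Finset (Set Y)) : Prop :=
  (∀ s ∈ U, IsOpen s) ∧ (⋃₀ (U : Set (Set Y)) = Set.univ) ∧
    ∀ T ⊆ U, T.Nonempty → (⋂₀ (T : Set (Set Y))).Nonempty →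
      ContractibleSpace ↥(⋂₀ (T : Set (Set Y)))

/-! Everything is computed with singular cochains modulo 2. The last column of a matrix defines a
fibration `SU(k + 1) → S^(2k + 1)` with fibre `SU(k)`. Gluing the parts of `SU(k + 1)` over larger
and larger caps of the sphere by Mayer–Vietoris sequences produces, by induction on `k`, classes of
degrees `3, 5, …, 2k + 1` whose cup product generates the top cohomology group. Their product is
still nonzero in any space homotopy equivalent to `SU(n)`.

Let `T` be a subfamily of a good cover on whose union a product `x₁ ⋯ xₘ` of total degree `D` does
not vanish. By the nerve of the cover, `T` has a subfamily `K` of `D + 1` members whose union is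
acyclic. As `xₘ` vanishes on the union of `K`, the product `x₁ ⋯ xₘ₋₁` cannot vanish on the union of
`T \ K`. Peeling off the factors one after another bounds the size of the cover by a sum of partial
sums of the degrees. One more set is gained at the last two factors: a union which carries a class
of degree `d` and has only `d + 2` members has the cohomology of a sphere, hence no class of the
other degree.
-/

open Finset Set
open scoped ContinuousMap Matrix ComplexOrder

/-- Mod 2 cochains on the ordered simplices with vertices in `V`, a simplex being the list of its
vertices, with repetitions allowed. The empty simplex is included; on the cochains coming from a
space its value is `0`. -/
abbrev OrderedCochain (V : Type*) : Type _ := List V → ZMod 2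

namespace OrderedCochain

variable {V W U : Type*}

/-- The pullback of cochains along a map of vertices. -/
def comap (φ : V → W) : OrderedCochain W →ₗ[ZMod 2] OrderedCochain V :=
  LinearMap.funLeft (ZMod 2) (ZMod 2) (List.map φ)

/-- The cochain `l ↦ F (v :: l)`, which evaluates `F` on cones with apex `v`. -/
def cone (v : V) : OrderedCochain V →ₗ[ZMod 2] OrderedCochain V :=
  LinearMap.funLeft (ZMod 2) (ZMod 2) (List.cons v)

/-- The simplicial coboundary. -/
def coboundary : OrderedCochain V →ₗ[ZMod 2] OrderedCochain V :=
  LinearMap.pi fun l => ∑ i ∈ range l.length, LinearMap.proj (l.eraseIdx i)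

/-- The cup product, given by the Alexander–Whitney formula. -/
def cup : OrderedCochain V →ₗ[ZMod 2] OrderedCochain V →ₗ[ZMod 2] OrderedCochain V :=
  LinearMap.mk₂ (ZMod 2) (fun F G l => ∑ i ∈ range l.length, F (l.take (i + 1)) * G (l.drop i))
    (fun F F' G => by ext l; simp [add_mul, sum_add_distrib])
    (fun c F G => by ext l; simp [mul_assoc, mul_sum])
    (fun F G G' => by ext l; simp [mul_add, sum_add_distrib])
    (fun c F G => by ext l; simp [mul_left_comm, mul_sum])

lemma comap_apply (φ : V → W) (F : OrderedCochain W) (l : List V) : comap φ F l = F (l.map φ) :=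
  rfl

lemma cone_apply (v : V) (F : OrderedCochain V) (l : List V) : cone v F l = F (v :: l) :=
  rfl

lemma coboundary_apply (F : OrderedCochain V) (l : List V) :
    coboundary F l = ∑ i ∈ range l.length, F (l.eraseIdx i) := by
  simp [coboundary]

lemma cup_apply (F G : OrderedCochain V) (l : List V) :
    cup F G l = ∑ i ∈ range l.length, F (l.take (i + 1)) * G (l.drop i) :=
  rfl

lemma cone_comap (φ : V → W) (v : V) (F : OrderedCochain W) :
    cone v (comap φ F) = comap φ (cone (φ v) F) :=
  rfl

lemma coboundary_nil (F : OrderedCochain V) : coboundary F [] = 0 := by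
  simp [coboundary_apply]

lemma coboundary_cons (F : OrderedCochain V) (v : V) (l : List V) :
    coboundary F (v :: l) = F l + coboundary (cone v F) l := by
  simp [coboundary_apply, sum_range_succ', cone_apply, add_comm]

lemma cone_coboundary (v : V) (F : OrderedCochain V) :
    cone v (coboundary F) = F + coboundary (cone v F) :=
  funext fun l => coboundary_cons F v l

lemma coboundary_congr {F G : OrderedCochain V} {l : List V}
    (h : ∀ l', l'.Sublist l → l'.length + 1 = l.length → F l' = G l') :
    coboundary F l = coboundary G l := by
  simp only [coboundary_apply]
  refine sum_congr rfl fun i hi => h _ (List.eraseIdx_sublist l i) ?_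
  exact List.length_eraseIdx_add_one (Finset.mem_range.1 hi)

lemma coboundary_comap (φ : V → W) (F : OrderedCochain W) :
    coboundary (comap φ F) = comap φ (coboundary F) := by
  ext l
  simp [coboundary_apply, comap_apply, List.eraseIdx_map]

lemma coboundary_coboundary (F : OrderedCochain V) : coboundary (coboundary F) = 0 := by
  ext l
  induction l generalizing F with
  | nil => exact coboundary_nil _
  | cons v l ih =>
    simp only [coboundary_cons, cone_coboundary, map_add, Pi.add_apply, ih, Pi.zero_apply,
      add_zero, CharTwo.add_self_eq_zero]

lemma cup_cons (F G : OrderedCochain V) (v : V) (l : List V) :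
    cup F G (v :: l) = F [v] * G (v :: l) + cup (cone v F) G l := by
  simp [cup_apply, sum_range_succ', cone_apply, add_comm]

lemma cone_cup (v : V) (F G : OrderedCochain V) :
    cone v (cup F G) = F [v] • cone v G + cup (cone v F) G :=
  funext fun l => cup_cons F G v l

lemma cup_comap (φ : V → W) (F G : OrderedCochain W) :
    cup (comap φ F) (comap φ G) = comap φ (cup F G) := by
  ext l
  simp [cup_apply, comap_apply, List.map_take, List.map_drop]

-- The last summand accounts for the value of `F` at the empty simplex.
lemma coboundary_cup (F : OrderedCochain V) {G : OrderedCochain V} (hG : G [] = 0) :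
    coboundary (cup F G) = cup (coboundary F) G + cup F (coboundary G) + F [] • G := by
  ext l
  induction l generalizing F with
  | nil => simp [coboundary_nil, cup_apply, hG]
  | cons v l ih =>
    simp only [coboundary_cons, cup_cons, cone_cup, cone_coboundary, coboundary_nil, map_add,
      map_smul, LinearMap.add_apply, Pi.add_apply, Pi.smul_apply, smul_eq_mul, ih, cone_apply]
    linear_combination -CharTwo.add_self_eq_zero (F [] * G (v :: l))

lemma cup_assoc (F G H : OrderedCochain V) : cup (cup F G) H = cup F (cup G H) := by
  ext l
  calc
    _ = ∑ k ∈ range l.length, ∑ i ∈ range (k + 1),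
          F (l.take (i + 1)) * G ((l.drop i).take (k - i + 1)) * H (l.drop (i + (k - i))) := by
      rw [cup_apply]
      refine sum_congr rfl fun k hk => ?_
      rw [cup_apply, sum_mul, List.length_take, min_eq_left (Finset.mem_range.1 hk)]
      refine sum_congr rfl fun i hi => ?_
      have hik : i ≤ k := by simpa [Nat.lt_succ_iff] using hi
      rw [List.take_take, List.drop_take, min_eq_left (by lia), Nat.add_sub_cancel' hik,
        Nat.sub_add_comm hik]
    _ = ∑ i ∈ range l.length, ∑ j ∈ range (l.length - i),
          F (l.take (i + 1)) * G ((l.drop i).take (j + 1)) * H (l.drop (i + j)) :=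
      sum_range_diag_flip l.length fun i j =>
        F (l.take (i + 1)) * G ((l.drop i).take (j + 1)) * H (l.drop (i + j))
    _ = _ := by
      simp only [cup_apply, mul_sum, List.length_drop, List.drop_drop, mul_assoc]

lemma cup_apply_eq_zero {p q : ℕ} {F G : OrderedCochain V}
    (hF : ∀ l, l.length ≠ p + 1 → F l = 0) (hG : ∀ l, l.length ≠ q + 1 → G l = 0)
    {l : List V} (hl : l.length ≠ p + q + 1) : cup F G l = 0 := by
  rw [cup_apply]
  refine sum_eq_zero fun i hi => ?_
  have hi := Finset.mem_range.1 hi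
  rcases eq_or_ne i p with rfl | hip
  · rw [hG _ (by rw [List.length_drop]; lia), mul_zero]
  · rw [hF _ (by rw [List.length_take]; lia), zero_mul]

lemma one_cup {F G : OrderedCochain V} (hF : ∀ l, F l = if l.length = 1 then 1 else 0)
    (hG : G [] = 0) : cup F G = G := by
  ext l
  cases l with
  | nil => exact hG.symm
  | cons v l =>
    rw [cup_apply, Finset.sum_eq_single 0]
    · simp [hF]
    · intro i hi h0
      have : (List.take (i + 1) (v :: l)).length ≠ 1 := by
        rw [List.length_take]; have := Finset.mem_range.1 hi; lia
      rw [hF, if_neg this, zero_mul]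
    · simp

lemma cup_one {F G : OrderedCochain V} (hG : ∀ l, G l = if l.length = 1 then 1 else 0)
    (hF : F [] = 0) : cup F G = F := by
  ext l
  cases l with
  | nil => exact hF.symm
  | cons v l =>
    rw [cup_apply, Finset.sum_eq_single l.length]
    · simp [hG]
    · intro i hi h0
      have : (List.drop i (v :: l)).length ≠ 1 := by
        rw [List.length_drop, List.length_cons]
        have := Finset.mem_range.1 hi
        rw [List.length_cons] at this
        lia
      rw [hG, if_neg this, mul_zero]
    · simp

/-- The prism operator, a chain homotopy between the pullbacks along any two maps of vertices. -/
def prism (φ ψ : V → W) (F : OrderedCochain W) : OrderedCochain V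
  | [] => 0
  | v :: l => F (φ v :: ψ v :: l.map ψ) + prism φ ψ (cone (φ v) F) l

lemma prism_add (φ ψ : V → W) (F G : OrderedCochain W) :
    prism φ ψ (F + G) = prism φ ψ F + prism φ ψ G := by
  ext l
  induction l generalizing F G with
  | nil => simp [prism]
  | cons v l ih => simp only [prism, map_add, Pi.add_apply, ih]; ring

lemma prism_zero (φ ψ : V → W) : prism φ ψ 0 = 0 :=
  map_zero (AddMonoidHom.mk' (prism φ ψ) (prism_add φ ψ))

lemma comap_prism (χ : U → V) (φ ψ : V → W) (F : OrderedCochain W) :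
    comap χ (prism φ ψ F) = prism (φ ∘ χ) (ψ ∘ χ) F := by
  ext l
  induction l generalizing F with
  | nil => rfl
  | cons v l ih =>
    have := ih (cone (φ (χ v)) F)
    simp_all [prism, comap_apply]

lemma prism_comap (φ ψ : V → W) (χ : W → U) (F : OrderedCochain U) :
    prism φ ψ (comap χ F) = prism (χ ∘ φ) (χ ∘ ψ) F := by
  ext l
  induction l generalizing F with
  | nil => rfl
  | cons v l ih => simp [prism, comap_apply, cone_comap, ih]

lemma coboundary_prism (φ ψ : V → W) (F : OrderedCochain W) :
    coboundary (prism φ ψ F) + prism φ ψ (coboundary F) = comap φ F + comap ψ F := by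
  ext l
  induction l generalizing F with
  | nil => simp [coboundary_nil, prism, comap_apply, CharTwo.add_self_eq_zero]
  | cons v l ih =>
    have hcone : cone v (prism φ ψ F) =
        comap ψ (cone (ψ v) (cone (φ v) F)) + prism φ ψ (cone (φ v) F) := rfl
    have h := ih (cone (φ v) F)
    simp only [Pi.add_apply, coboundary_cons, hcone, prism, cone_coboundary, prism_add, map_add,
      coboundary_comap, comap_apply, List.map_cons, cone_apply] at h ⊢
    linear_combination h + CharTwo.add_self_eq_zero (prism φ ψ F l) +
      CharTwo.add_self_eq_zero (coboundary (cone (ψ v) (cone (φ v) F)) (l.map ψ)) +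
      CharTwo.add_self_eq_zero (F (φ v :: l.map ψ))

lemma length_induction {P : List V → Prop} (nil : P [])
    (cons : ∀ v l, (∀ m, m.Sublist (v :: l) → m.length + 1 = (v :: l).length → P m) →
      P (v :: l)) (l : List V) : P l := by
  induction hn : l.length generalizing l with
  | zero => rwa [List.length_eq_zero_iff.1 hn]
  | succ n ih =>
    cases l with
    | nil => exact nil
    | cons v l => exact cons v l fun m _ hm => ih m (by lia)

/-- Evaluation of cochains on the barycentric subdivision of a simplex, where `b v l` is the
barycenter of `v :: l`: the subdivision of a simplex is the cone over the subdivided boundary. -/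
def subdivisionAt (b : V → List V → V) : List V → OrderedCochain V →ₗ[ZMod 2] ZMod 2
  | [] => LinearMap.proj []
  | v :: l => ∑ i : Fin (v :: l).length,
      subdivisionAt b ((v :: l).eraseIdx i) ∘ₗ cone (b v l)
termination_by l => l.length
decreasing_by rw [List.length_eraseIdx_of_lt i.2]; simp

/-- Barycentric subdivision of cochains. -/
def subdivision (b : V → List V → V) : OrderedCochain V →ₗ[ZMod 2] OrderedCochain V :=
  LinearMap.pi (subdivisionAt b)

/-- Evaluation of cochains on the chain which joins a simplex to its barycentric subdivision. -/
def subdivisionHomotopyAt (b : V → List V → V) : List V → OrderedCochain V →ₗ[ZMod 2] ZMod 2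
  | [] => 0
  | v :: l => LinearMap.proj (b v l :: v :: l) + ∑ i : Fin (v :: l).length,
      subdivisionHomotopyAt b ((v :: l).eraseIdx i) ∘ₗ cone (b v l)
termination_by l => l.length
decreasing_by rw [List.length_eraseIdx_of_lt i.2]; simp

/-- The chain homotopy between barycentric subdivision and the identity. -/
def subdivisionHomotopy (b : V → List V → V) : OrderedCochain V →ₗ[ZMod 2] OrderedCochain V :=
  LinearMap.pi (subdivisionHomotopyAt b)

section Subdivision

variable (b : V → List V → V) (b' : W → List W → W)

lemma subdivision_nil (F : OrderedCochain V) : subdivision b F [] = F [] := by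
  simp [subdivision, subdivisionAt]

lemma subdivision_cons (F : OrderedCochain V) (v : V) (l : List V) :
    subdivision b F (v :: l) = coboundary (subdivision b (cone (b v l) F)) (v :: l) := by
  simp only [subdivision, LinearMap.pi_apply, coboundary_apply]
  rw [subdivisionAt, LinearMap.sum_apply,
    ← Fin.sum_univ_eq_sum_range fun i => subdivisionAt b ((v :: l).eraseIdx i) (cone (b v l) F)]
  rfl

lemma subdivisionHomotopy_nil (F : OrderedCochain V) : subdivisionHomotopy b F [] = 0 := by
  simp [subdivisionHomotopy, subdivisionHomotopyAt]

lemma subdivisionHomotopy_cons (F : OrderedCochain V) (v : V) (l : List V) :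
    subdivisionHomotopy b F (v :: l) =
      F (b v l :: v :: l) + coboundary (subdivisionHomotopy b (cone (b v l) F)) (v :: l) := by
  simp only [subdivisionHomotopy, LinearMap.pi_apply, coboundary_apply]
  rw [subdivisionHomotopyAt, LinearMap.add_apply, LinearMap.sum_apply,
    ← Fin.sum_univ_eq_sum_range
      fun i => subdivisionHomotopyAt b ((v :: l).eraseIdx i) (cone (b v l) F)]
  rfl

variable {b b'}

lemma subdivision_comap {φ : V → W} (hφ : ∀ v l, φ (b v l) = b' (φ v) (l.map φ))
    (F : OrderedCochain W) : subdivision b (comap φ F) = comap φ (subdivision b' F) := by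
  ext l
  induction l using length_induction generalizing F with
  | nil => simp [subdivision_nil, comap_apply]
  | cons v l ih =>
    rw [subdivision_cons, cone_comap, hφ]
    change _ = subdivision b' F (φ v :: l.map φ)
    rw [subdivision_cons]
    change _ = comap φ (coboundary _) (v :: l)
    rw [← coboundary_comap]
    exact coboundary_congr fun l' hl' hlen => ih l' hl' hlen _

lemma subdivisionHomotopy_comap {φ : V → W} (hφ : ∀ v l, φ (b v l) = b' (φ v) (l.map φ))
    (F : OrderedCochain W) :
    subdivisionHomotopy b (comap φ F) = comap φ (subdivisionHomotopy b' F) := by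
  ext l
  induction l using length_induction generalizing F with
  | nil => simp [subdivisionHomotopy_nil, comap_apply]
  | cons v l ih =>
    rw [subdivisionHomotopy_cons, cone_comap, comap_apply φ F, List.map_cons, hφ]
    change _ = subdivisionHomotopy b' F (φ v :: l.map φ)
    rw [subdivisionHomotopy_cons]
    change _ = _ + comap φ (coboundary _) (v :: l)
    rw [← coboundary_comap, List.map_cons]
    congr 1
    exact coboundary_congr fun l' hl' hlen => ih l' hl' hlen _

variable (b)

lemma subdivision_coboundary (F : OrderedCochain V) :
    subdivision b (coboundary F) = coboundary (subdivision b F) := by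
  ext l
  induction l using length_induction generalizing F with
  | nil => rw [subdivision_nil, coboundary_nil, coboundary_nil]
  | cons v l ih =>
    have h : coboundary (subdivision b (coboundary (cone (b v l) F))) (v :: l) = 0 := by
      rw [coboundary_congr (G := coboundary (subdivision b (cone (b v l) F)))
        fun l' hl' hlen => ih l' hl' hlen _, coboundary_coboundary, Pi.zero_apply]
    rw [subdivision_cons, cone_coboundary, map_add, map_add, Pi.add_apply, h, add_zero]

lemma coboundary_subdivisionHomotopy (F : OrderedCochain V) :
    coboundary (subdivisionHomotopy b F) + subdivisionHomotopy b (coboundary F) =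
      F + subdivision b F := by
  ext l
  induction l using length_induction generalizing F with
  | nil => simp [coboundary_nil, subdivisionHomotopy_nil, subdivision_nil,
      CharTwo.add_self_eq_zero]
  | cons v l ih =>
    set G := cone (b v l) F with hG
    have hfaces : coboundary (coboundary (subdivisionHomotopy b G) +
          subdivisionHomotopy b (coboundary G)) (v :: l) =
        coboundary (G + subdivision b G) (v :: l) :=
      coboundary_congr fun l' hl' hlen => ih l' hl' hlen G
    simp only [map_add, Pi.add_apply, coboundary_coboundary, Pi.zero_apply, zero_add] at hfaces
    simp only [Pi.add_apply, subdivisionHomotopy_cons b (coboundary F), cone_coboundary, ← hG,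
      map_add, hfaces, coboundary_cons F (b v l), subdivision_cons b F]
    linear_combination
      CharTwo.add_self_eq_zero (coboundary (subdivisionHomotopy b F) (v :: l)) +
      CharTwo.add_self_eq_zero (coboundary G (v :: l))

end Subdivision

end OrderedCochain

/-- The standard geometric `N`-simplex. -/
abbrev GeomSimplex (N : ℕ) : Type := stdSimplex ℝ (Fin (N + 1))

section ConvexSimplex

variable {E : Type*} [AddCommGroup E] [Module ℝ E] [TopologicalSpace E] [IsTopologicalAddGroup E]
  [ContinuousSMul ℝ E] {K : Set E} {N M : ℕ}

/-- The affine simplex with given vertices in a convex set. -/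
def convexSimplex (hK : Convex ℝ K) (w : Fin (N + 1) → K) : C(GeomSimplex N, K) where
  toFun x := ⟨∑ i, x.1 i • (w i : E), hK.sum_mem (fun i _ => x.2.1 i) x.2.2 fun i _ => (w i).2⟩
  continuous_toFun := by
    refine Continuous.subtype_mk (continuous_finsetSum _ fun i _ => ?_) _
    exact ((continuous_apply i).comp continuous_subtype_val).smul continuous_const

lemma convexSimplex_coe (hK : Convex ℝ K) (w : Fin (N + 1) → K) (x : GeomSimplex N) :
    (convexSimplex hK w x : E) = ∑ i, x.1 i • (w i : E) :=
  rfl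

lemma convexSimplex_convexSimplex (hK : Convex ℝ K) (w : Fin (M + 1) → K)
    (u : Fin (N + 1) → GeomSimplex M) (x : GeomSimplex N) :
    convexSimplex hK w (convexSimplex (convex_stdSimplex ℝ _) u x) =
      convexSimplex hK (fun i => convexSimplex hK w (u i)) x := by
  ext
  simp only [convexSimplex_coe, Finset.sum_apply, Pi.smul_apply, smul_sum, sum_smul, smul_smul,
    smul_eq_mul]
  rw [Finset.sum_comm]

lemma convexSimplex_vertex (hK : Convex ℝ K) (w : Fin (N + 1) → K) (i : Fin (N + 1)) :
    convexSimplex hK w (stdSimplex.vertex i) = w i := by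
  ext
  simp [convexSimplex_coe, stdSimplex.vertex, Pi.single_apply]

lemma convexSimplex_const (hK : Convex ℝ K) (c : K) (x : GeomSimplex N) :
    convexSimplex hK (fun _ => c) x = c := by
  ext
  rw [convexSimplex_coe, ← sum_smul, x.2.2, one_smul]

end ConvexSimplex

/-- A space in which any finite nonempty family of points spans an affine simplex. These are the
spaces on whose singular simplices cochains get evaluated combinatorially. -/
class HasAffineSimplices (D : Type*) [TopologicalSpace D] where
  /-- The affine simplex with given vertices. -/
  affine {N : ℕ} : (Fin (N + 1) → D) → C(GeomSimplex N, D)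
  affine_convexSimplex {N M : ℕ} (w : Fin (M + 1) → D) (u : Fin (N + 1) → GeomSimplex M)
    (x : GeomSimplex N) : affine w (convexSimplex (convex_stdSimplex ℝ _) u x) =
      affine (fun i => affine w (u i)) x
  affine_vertex {N : ℕ} (w : Fin (N + 1) → D) (i : Fin (N + 1)) :
    affine w (stdSimplex.vertex i) = w i
  affine_const {N : ℕ} (c : D) (x : GeomSimplex N) : affine (fun _ => c) x = c

namespace HasAffineSimplices

instance (N : ℕ) : HasAffineSimplices (GeomSimplex N) where
  affine := convexSimplex (convex_stdSimplex ℝ _)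
  affine_convexSimplex := convexSimplex_convexSimplex _
  affine_vertex := convexSimplex_vertex _
  affine_const := convexSimplex_const _

instance : HasAffineSimplices unitInterval where
  affine := convexSimplex (convex_Icc (0 : ℝ) 1)
  affine_convexSimplex := convexSimplex_convexSimplex _
  affine_vertex := convexSimplex_vertex _
  affine_const := convexSimplex_const _

variable {D D' : Type*} [TopologicalSpace D] [TopologicalSpace D'] [HasAffineSimplices D]
  [HasAffineSimplices D'] {N : ℕ}

instance : HasAffineSimplices (D × D') where
  affine w := (affine fun i => (w i).1).prodMk (affine fun i => (w i).2)
  affine_convexSimplex w u x := by simp only [ContinuousMap.prod_eval, affine_convexSimplex]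
  affine_vertex w i := by simp only [ContinuousMap.prod_eval, affine_vertex]
  affine_const c x := by simp only [ContinuousMap.prod_eval, affine_const]

/-- Maps which carry affine simplices to affine simplices. -/
def IsAffineMap (α : C(D, D')) : Prop :=
  ∀ (N : ℕ) (u : Fin (N + 1) → D), α.comp (affine u) = affine (α ∘ u)

lemma isAffineMap_affine (w : Fin (N + 1) → D) : IsAffineMap (affine w) :=
  fun _ u => ContinuousMap.ext (affine_convexSimplex w u)

/-- The list of vertices of the standard simplex. -/
def vertices (N : ℕ) : List (GeomSimplex N) := List.ofFn stdSimplex.vertex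

lemma length_vertices (N : ℕ) : (vertices N).length = N + 1 := by simp [vertices]

lemma affine_vertices (N : ℕ) :
    affine (stdSimplex.vertex (S := ℝ) (X := Fin (N + 1))) = ContinuousMap.id _ := by
  ext x j
  change (convexSimplex (convex_stdSimplex ℝ _) _ x).1 j = x.1 j
  simp [convexSimplex_coe, Finset.sum_apply, Pi.single_apply]

lemma map_vertices (u : Fin (N + 1) → D) : (vertices N).map (affine u) = List.ofFn u := by
  rw [vertices, List.map_ofFn]
  exact congrArg List.ofFn (funext (affine_vertex u))

lemma exists_ofFn_eq_cons {V : Type*} (v : V) (l : List V) :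
    ∃ u : Fin (l.length + 1) → V, List.ofFn u = v :: l :=
  ⟨(v :: l).get, List.ofFn_get _⟩

lemma apply_get_eq {V β : Type*} (Φ : ∀ N : ℕ, (Fin (N + 1) → V) → β) {v : V} {l : List V}
    {u : Fin (N + 1) → V} (h : List.ofFn u = v :: l) : Φ l.length (v :: l).get = Φ N u := by
  obtain rfl : l.length = N := by simpa using (congrArg List.length h).symm
  exact congrArg _ (List.ofFn_injective ((List.ofFn_get _).trans h.symm))

/-- The barycenter of the affine simplex with list of vertices `v :: l`. -/
noncomputable def barycenter (v : D) (l : List D) : D :=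
  affine (N := l.length) (v :: l).get stdSimplex.barycenter

lemma barycenter_eq {v : D} {l : List D} {u : Fin (N + 1) → D} (h : List.ofFn u = v :: l) :
    barycenter v l = affine u stdSimplex.barycenter :=
  apply_get_eq (fun _ u => affine u stdSimplex.barycenter) h

lemma IsAffineMap.map_barycenter {α : C(D, D')} (hα : IsAffineMap α) (v : D) (l : List D) :
    α (barycenter v l) = barycenter (α v) (l.map α) := by
  obtain ⟨u, hu⟩ := exists_ofFn_eq_cons v l
  rw [barycenter_eq hu, barycenter_eq (u := α ∘ u) (by rw [← List.map_ofFn, hu, List.map_cons]),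
    ← hα]
  rfl

end HasAffineSimplices

open HasAffineSimplices

/-- Singular cochains with coefficients in `ZMod 2`, of all degrees at once. -/
abbrev SingularCochain (X : Type*) [TopologicalSpace X] : Type _ :=
  ∀ N : ℕ, C(GeomSimplex N, X) → ZMod 2

namespace SingularCochain

variable {X Y : Type*} [TopologicalSpace X] [TopologicalSpace Y]
  {D D' : Type*} [TopologicalSpace D] [TopologicalSpace D'] [HasAffineSimplices D]
  [HasAffineSimplices D'] {N j p q : ℕ}

/-- The pullback of singular cochains along a continuous map. -/
def pullback (φ : C(X, Y)) : SingularCochain Y →ₗ[ZMod 2] SingularCochain X :=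
  LinearMap.pi fun N => LinearMap.funLeft (ZMod 2) (ZMod 2) φ.comp ∘ₗ LinearMap.proj N

/-- The values of a singular cochain on the affine simplices of `D`, mapped to `X` along `σ`. -/
def eval (σ : C(D, X)) : SingularCochain X →ₗ[ZMod 2] OrderedCochain D :=
  LinearMap.pi fun
    | [] => 0
    | v :: l => LinearMap.proj (σ.comp (affine (N := l.length) (v :: l).get)) ∘ₗ
        LinearMap.proj l.length

lemma pullback_apply (φ : C(X, Y)) (f : SingularCochain Y) (σ : C(GeomSimplex N, X)) :
    pullback φ f N σ = f N (φ.comp σ) :=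
  rfl

lemma eval_nil (σ : C(D, X)) (f : SingularCochain X) : eval σ f [] = 0 :=
  rfl

lemma eval_ofFn (σ : C(D, X)) (f : SingularCochain X) (u : Fin (N + 1) → D) :
    eval σ f (List.ofFn u) = f N (σ.comp (affine u)) := by
  obtain ⟨v, l, h⟩ := List.exists_cons_of_ne_nil (l := List.ofFn u) (by simp)
  rw [h]
  exact apply_get_eq (fun N u => f N (σ.comp (affine u))) h

lemma eval_vertices (σ : C(GeomSimplex N, X)) (f : SingularCochain X) :
    eval σ f (vertices N) = f N σ := by
  rw [vertices, eval_ofFn, affine_vertices, ContinuousMap.comp_id]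

lemma eval_eq_of_apply {σ : C(D, X)} {f : SingularCochain X} {F : OrderedCochain D}
    (nil : F [] = 0) (h : ∀ N u, f N (σ.comp (affine u)) = F (List.ofFn (n := N + 1) u)) :
    eval σ f = F := by
  ext l
  cases l with
  | nil => rw [eval_nil, nil]
  | cons v l =>
    obtain ⟨u, hu⟩ := exists_ofFn_eq_cons v l
    rw [← hu, eval_ofFn, h]

lemma eval_comp (σ : C(D', X)) {α : C(D, D')} (hα : IsAffineMap α) (f : SingularCochain X) :
    eval (σ.comp α) f = OrderedCochain.comap α (eval σ f) :=
  eval_eq_of_apply rfl fun N u => by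
    rw [OrderedCochain.comap_apply, List.map_ofFn, eval_ofFn, ← hα, ContinuousMap.comp_assoc]

lemma eval_pullback (σ : C(D, X)) (φ : C(X, Y)) (f : SingularCochain Y) :
    eval σ (pullback φ f) = eval (φ.comp σ) f :=
  funext fun l => by cases l <;> rfl

/-- The operation on singular cochains induced by operations on ordered cochains. -/
def lift (Φ : ∀ N, Module.End (ZMod 2) (OrderedCochain (GeomSimplex N))) :
    Module.End (ZMod 2) (SingularCochain X) :=
  LinearMap.pi fun N => LinearMap.pi fun σ => LinearMap.proj (vertices N) ∘ₗ Φ N ∘ₗ eval σ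

lemma pullback_lift (φ : C(X, Y)) {Φ : ∀ N, Module.End (ZMod 2) (OrderedCochain (GeomSimplex N))}
    (f : SingularCochain Y) : pullback φ (lift Φ f) = lift Φ (pullback φ f) := by
  ext N σ
  change Φ N (eval (φ.comp σ) f) (vertices N) = Φ N (eval σ (pullback φ f)) (vertices N)
  rw [eval_pullback]

lemma eval_lift {Φ : ∀ N, Module.End (ZMod 2) (OrderedCochain (GeomSimplex N))}
    {Ψ : OrderedCochain D → OrderedCochain D} (nil : ∀ F, F [] = 0 → Ψ F [] = 0)
    (hΨ : ∀ N (u : Fin (N + 1) → D) F,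
      Φ N (OrderedCochain.comap (affine u) F) = OrderedCochain.comap (affine u) (Ψ F))
    (σ : C(D, X)) (f : SingularCochain X) : eval σ (lift Φ f) = Ψ (eval σ f) :=
  eval_eq_of_apply (nil _ (eval_nil σ f)) fun N u => by
    change Φ N (eval (σ.comp (affine u)) f) (vertices N) = _
    rw [eval_comp _ (isAffineMap_affine u), hΨ, OrderedCochain.comap_apply, map_vertices]

/-- The singular coboundary. -/
def coboundary : Module.End (ZMod 2) (SingularCochain X) :=
  lift fun _ => OrderedCochain.coboundary

/-- Barycentric subdivision of singular cochains. -/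
noncomputable def subdivision : Module.End (ZMod 2) (SingularCochain X) :=
  lift fun _ => OrderedCochain.subdivision barycenter

/-- The chain homotopy between the identity and barycentric subdivision. -/
noncomputable def subdivisionHomotopy : Module.End (ZMod 2) (SingularCochain X) :=
  lift fun _ => OrderedCochain.subdivisionHomotopy barycenter

/-- The cup product of singular cochains. -/
def cup : SingularCochain X →ₗ[ZMod 2] SingularCochain X →ₗ[ZMod 2] SingularCochain X :=
  LinearMap.mk₂ (ZMod 2) (fun f g N σ => OrderedCochain.cup (eval σ f) (eval σ g) (vertices N))
    (fun f f' g => by ext; simp) (fun c f g => by ext; simp)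
    (fun f g g' => by ext; simp) (fun c f g => by ext; simp)

lemma cup_apply (f g : SingularCochain X) (σ : C(GeomSimplex N, X)) :
    cup f g N σ = OrderedCochain.cup (eval σ f) (eval σ g) (vertices N) :=
  rfl

/-- The unit cocycle, which takes the value `1` at every vertex. -/
def unit : SingularCochain X := fun N _ => if N = 0 then 1 else 0

/-- The singular cochains of degree `j`. -/
def homogeneous (j : ℕ) : Submodule (ZMod 2) (SingularCochain X) :=
  Submodule.pi {N | N ≠ j} fun _ => ⊥

/-- The component of degree `j` of a singular cochain. -/
def component (j : ℕ) : Module.End (ZMod 2) (SingularCochain X) :=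
  LinearMap.single (ZMod 2) _ j ∘ₗ LinearMap.proj j

lemma eval_coboundary (σ : C(D, X)) (f : SingularCochain X) :
    eval σ (coboundary f) = OrderedCochain.coboundary (eval σ f) :=
  eval_lift (fun F _ => OrderedCochain.coboundary_nil F)
    (fun _ _ _ => OrderedCochain.coboundary_comap _ _) σ f

lemma eval_subdivision (σ : C(D, X)) (f : SingularCochain X) :
    eval σ (subdivision f) = OrderedCochain.subdivision barycenter (eval σ f) :=
  eval_lift (fun F h => by rw [OrderedCochain.subdivision_nil, h])
    (fun _ u _ => OrderedCochain.subdivision_comap (isAffineMap_affine u).map_barycenter _) σ f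

lemma eval_subdivisionHomotopy (σ : C(D, X)) (f : SingularCochain X) :
    eval σ (subdivisionHomotopy f) = OrderedCochain.subdivisionHomotopy barycenter (eval σ f) :=
  eval_lift (fun F _ => OrderedCochain.subdivisionHomotopy_nil _ F)
    (fun _ u _ => OrderedCochain.subdivisionHomotopy_comap (isAffineMap_affine u).map_barycenter _)
    σ f

lemma eval_cup (σ : C(D, X)) (f g : SingularCochain X) :
    eval σ (cup f g) = OrderedCochain.cup (eval σ f) (eval σ g) :=
  eval_eq_of_apply (by simp [OrderedCochain.cup_apply]) fun N u => by
    rw [cup_apply, eval_comp _ (isAffineMap_affine u), eval_comp _ (isAffineMap_affine u),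
      OrderedCochain.cup_comap, OrderedCochain.comap_apply, map_vertices]

lemma eval_unit (σ : C(D, X)) (l : List D) :
    eval σ unit l = if l.length = 1 then 1 else 0 := by
  cases l with
  | nil => rfl
  | cons v l => simp [eval, unit]

lemma ext_eval {f g : SingularCochain X} (h : ∀ N (σ : C(GeomSimplex N, X)), eval σ f = eval σ g) :
    f = g := by
  ext N σ
  rw [← eval_vertices σ f, h, eval_vertices]

lemma coboundary_coboundary (f : SingularCochain X) : coboundary (coboundary f) = 0 :=
  ext_eval fun _ σ => by
    simp only [eval_coboundary, OrderedCochain.coboundary_coboundary, map_zero]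

lemma coboundary_cup (f g : SingularCochain X) :
    coboundary (cup f g) = cup (coboundary f) g + cup f (coboundary g) :=
  ext_eval fun _ σ => by
    simp only [eval_coboundary, eval_cup, map_add, eval_nil,
      OrderedCochain.coboundary_cup _ (eval_nil σ g), zero_smul, add_zero]

lemma unit_cup (f : SingularCochain X) : cup unit f = f :=
  ext_eval fun _ σ => by
    rw [eval_cup, OrderedCochain.one_cup (eval_unit σ) (eval_nil σ f)]

lemma cup_unit (f : SingularCochain X) : cup f unit = f :=
  ext_eval fun _ σ => by
    rw [eval_cup, OrderedCochain.cup_one (eval_unit σ) (eval_nil σ f)]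

lemma cup_assoc (f g h : SingularCochain X) : cup (cup f g) h = cup f (cup g h) :=
  ext_eval fun _ σ => by simp only [eval_cup, OrderedCochain.cup_assoc]

lemma coboundary_unit : coboundary (unit : SingularCochain X) = 0 := by
  refine ext_eval fun N σ => funext fun l => ?_
  rw [eval_coboundary, OrderedCochain.coboundary_apply, map_zero, Pi.zero_apply]
  by_cases hl : l.length = 2
  · rw [hl, sum_range_succ, sum_range_one, eval_unit, eval_unit]
    simp [hl, List.length_eraseIdx, CharTwo.add_self_eq_zero]
  · refine sum_eq_zero fun i hi => ?_
    have := List.length_eraseIdx_add_one (Finset.mem_range.1 hi)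
    rw [eval_unit, if_neg (by lia)]

lemma subdivision_coboundary :
    (subdivision * coboundary : Module.End (ZMod 2) (SingularCochain X)) =
      coboundary * subdivision :=
  LinearMap.ext fun f => ext_eval fun _ σ => by
    simp only [Module.End.mul_apply, eval_coboundary, eval_subdivision,
      OrderedCochain.subdivision_coboundary]

lemma coboundary_subdivisionHomotopy :
    (coboundary * subdivisionHomotopy + subdivisionHomotopy * coboundary :
      Module.End (ZMod 2) (SingularCochain X)) = 1 + subdivision :=
  LinearMap.ext fun f => ext_eval fun _ σ => by
    simp only [LinearMap.add_apply, Module.End.mul_apply, Module.End.one_apply, map_add,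
      eval_coboundary, eval_subdivision, eval_subdivisionHomotopy,
      OrderedCochain.coboundary_subdivisionHomotopy]

lemma pullback_coboundary (φ : C(X, Y)) (f : SingularCochain Y) :
    pullback φ (coboundary f) = coboundary (pullback φ f) :=
  pullback_lift φ f

lemma pullback_subdivision (φ : C(X, Y)) (f : SingularCochain Y) :
    pullback φ (subdivision f) = subdivision (pullback φ f) :=
  pullback_lift φ f

lemma pullback_subdivisionHomotopy (φ : C(X, Y)) (f : SingularCochain Y) :
    pullback φ (subdivisionHomotopy f) = subdivisionHomotopy (pullback φ f) :=
  pullback_lift φ f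

lemma pullback_cup (φ : C(X, Y)) (f g : SingularCochain Y) :
    pullback φ (cup f g) = cup (pullback φ f) (pullback φ g) :=
  ext_eval fun _ σ => by simp only [eval_pullback, eval_cup]

lemma pullback_unit (φ : C(X, Y)) : pullback φ unit = unit :=
  rfl

lemma pullback_component (φ : C(X, Y)) (f : SingularCochain Y) :
    pullback φ (component j f) = component j (pullback φ f) := by
  ext N σ
  by_cases h : N = j
  · subst h; simp [component, pullback_apply]
  · simp [component, pullback_apply, h]

lemma mem_homogeneous {f : SingularCochain X} : f ∈ homogeneous j ↔ ∀ N ≠ j, f N = 0 :=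
  Iff.rfl

lemma component_mem_homogeneous (j : ℕ) (f : SingularCochain X) : component j f ∈ homogeneous j :=
  fun _ hN => Pi.single_eq_of_ne hN _

lemma component_eq_self {f : SingularCochain X} (hf : f ∈ homogeneous j) : component j f = f := by
  funext N
  by_cases h : N = j
  · subst h; exact Pi.single_eq_same N _
  · rw [mem_homogeneous.1 hf N h]; exact Pi.single_eq_of_ne h _

lemma component_eq_zero {f : SingularCochain X} (hf : f ∈ homogeneous p) (h : j ≠ p) :
    component j f = 0 := by
  rw [component, LinearMap.comp_apply, LinearMap.proj_apply, mem_homogeneous.1 hf j h, map_zero]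

lemma eval_component (σ : C(D, X)) (f : SingularCochain X) (l : List D) :
    eval σ (component j f) l = if l.length = j + 1 then eval σ f l else 0 := by
  cases l with
  | nil => simp [eval_nil]
  | cons v l =>
    by_cases h : l.length = j
    · subst h; simp [component, eval]
    · simp [component, eval, h]

lemma eval_eq_zero_of_mem_homogeneous {f : SingularCochain X} (hf : f ∈ homogeneous j)
    (σ : C(D, X)) {l : List D} (hl : l.length ≠ j + 1) : eval σ f l = 0 := by
  rw [← component_eq_self hf, eval_component, if_neg hl]

lemma coboundary_component (j : ℕ) (f : SingularCochain X) :
    coboundary (component j f) = component (j + 1) (coboundary f) := by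
  refine ext_eval fun _ σ => funext fun l => ?_
  rw [eval_component, eval_coboundary, eval_coboundary]
  have h l' (hl' : l'.length + 1 = l.length) :
      eval σ (component j f) l' = if l.length = j + 1 + 1 then eval σ f l' else 0 := by
    rw [eval_component, ← hl']; simp
  split_ifs at h ⊢ with hl
  · exact OrderedCochain.coboundary_congr fun l' _ hl' => h l' hl'
  · rw [OrderedCochain.coboundary_congr (G := 0) fun l' _ hl' => h l' hl', map_zero,
      Pi.zero_apply]

lemma component_zero_coboundary (f : SingularCochain X) : component 0 (coboundary f) = 0 := by
  refine ext_eval fun _ σ => funext fun l => ?_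
  rw [eval_component, eval_coboundary, map_zero, Pi.zero_apply]
  split_ifs with hl
  · obtain ⟨v, rfl⟩ := List.length_eq_one_iff.1 hl
    simp [OrderedCochain.coboundary_apply, eval_nil]
  · rfl

lemma unit_mem_homogeneous : (unit : SingularCochain X) ∈ homogeneous 0 :=
  fun _ hN => funext fun _ => if_neg hN

lemma cup_mem_homogeneous {f g : SingularCochain X} (hf : f ∈ homogeneous p)
    (hg : g ∈ homogeneous q) : cup f g ∈ homogeneous (p + q) :=
  fun N hN => funext fun σ => OrderedCochain.cup_apply_eq_zero
    (fun _ => eval_eq_zero_of_mem_homogeneous hf σ) (fun _ => eval_eq_zero_of_mem_homogeneous hg σ)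
    (by rw [length_vertices]; simpa using hN)

lemma coboundary_mem_homogeneous {f : SingularCochain X} (hf : f ∈ homogeneous j) :
    coboundary f ∈ homogeneous (j + 1) := by
  rw [← component_eq_self hf, coboundary_component]
  exact component_mem_homogeneous _ _

lemma pullback_mem_homogeneous (φ : C(X, Y)) {f : SingularCochain Y} (hf : f ∈ homogeneous j) :
    pullback φ f ∈ homogeneous j :=
  fun N hN => funext fun σ => congrFun (mem_homogeneous.1 hf N hN) (φ.comp σ)

end SingularCochain

section Mesh

variable {N M n : ℕ} {δ : ℝ}

lemma affine_mem_of_convex {K : Set (Fin (N + 1) → ℝ)} (hK : Convex ℝ K)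
    {u : Fin (M + 1) → GeomSimplex N} (hu : ∀ i, (u i).1 ∈ K) (x : GeomSimplex M) :
    (affine u x).1 ∈ K :=
  hK.sum_mem (fun i _ => x.2.1 i) x.2.2 fun i _ => hu i

lemma dist_affine_barycenter_le {u : Fin (M + 1) → GeomSimplex N}
    (hu : ∀ i j, dist (u i) (u j) ≤ δ) (j : Fin (M + 1)) :
    dist (u j) (affine u stdSimplex.barycenter) ≤ M / (M + 1) * δ := by
  have hdiff : (u j).1 - (affine u stdSimplex.barycenter).1 =
      ∑ i, (1 / ((M : ℝ) + 1)) • ((u j).1 - (u i).1) := by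
    have hM : (M : ℝ) + 1 ≠ 0 := by positivity
    have hbar i : (stdSimplex.barycenter : GeomSimplex M).1 i = 1 / ((M : ℝ) + 1) :=
      (stdSimplex.barycenter_apply i).trans (by simp)
    change (u j).1 - ∑ i, (stdSimplex.barycenter : GeomSimplex M).1 i • (u i).1 = _
    simp only [hbar, smul_sub, sum_sub_distrib, sum_const, card_univ, Fintype.card_fin,
      ← Nat.cast_smul_eq_nsmul ℝ, smul_smul]
    push_cast
    rw [mul_one_div_cancel hM, one_smul]
  rw [Subtype.dist_eq, dist_eq_norm, hdiff, ← add_sum_erase _ _ (Finset.mem_univ j), sub_self,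
    smul_zero, zero_add]
  calc ‖∑ i ∈ univ.erase j, (1 / ((M : ℝ) + 1)) • ((u j).1 - (u i).1)‖
      ≤ ∑ i ∈ univ.erase j, 1 / ((M : ℝ) + 1) * δ := by
        refine norm_sum_le_of_le _ fun i _ => ?_
        rw [norm_smul, Real.norm_of_nonneg (by positivity), ← dist_eq_norm]
        exact mul_le_mul_of_nonneg_left (hu j i) (by positivity)
    _ = M / (M + 1) * δ := by
        rw [sum_const, card_erase_of_mem (Finset.mem_univ j), card_univ, Fintype.card_fin,
          nsmul_eq_mul, Nat.add_sub_cancel]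
        ring

/-- A list of points has mesh at most `δ` if any two of them are at distance at most `δ`. -/
def MeshLE (δ : ℝ) (l : List (GeomSimplex N)) : Prop := ∀ x ∈ l, ∀ y ∈ l, dist x y ≤ δ

lemma MeshLE.dist_barycenter_le {v : GeomSimplex N} {l : List (GeomSimplex N)}
    (hδ : 0 ≤ δ) (h : MeshLE δ (v :: l)) (hl : l.length ≤ n) {w : GeomSimplex N}
    (hw : w ∈ v :: l) : dist w (barycenter v l) ≤ n / (n + 1) * δ := by
  obtain ⟨u, hu⟩ := exists_ofFn_eq_cons v l
  rw [← hu] at h hw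
  obtain ⟨j, rfl⟩ := List.mem_ofFn.1 hw
  rw [barycenter_eq hu]
  have hln : (l.length : ℝ) ≤ n := mod_cast hl
  calc dist (u j) (affine u stdSimplex.barycenter) ≤ l.length / (l.length + 1) * δ :=
        dist_affine_barycenter_le
          (fun i j => h _ (List.mem_ofFn.2 ⟨i, rfl⟩) _ (List.mem_ofFn.2 ⟨j, rfl⟩)) j
    _ ≤ n / (n + 1) * δ := by
        gcongr ?_ * δ
        rw [div_le_div_iff₀ (by positivity) (by positivity)]
        linarith

lemma dist_barycenter_le {p v : GeomSimplex N} {l : List (GeomSimplex N)}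
    (h : ∀ w ∈ v :: l, dist w p ≤ δ) : dist (barycenter v l) p ≤ δ :=
  affine_mem_of_convex (convex_closedBall p.1 δ) (fun _ => h _ (List.get_mem _ _)) _

-- The balls in the last hypothesis keep the barycenters of different faces close to each other.
lemma subdivision_eq_zero_of_meshLE (hδ : 0 ≤ δ) {l : List (GeomSimplex N)}
    {F : OrderedCochain (GeomSimplex N)} (hl : l.length ≤ n + 1) (hmesh : MeshLE δ l)
    (hF : ∀ l', l'.length = l.length → MeshLE (n / (n + 1) * δ) l' →
      (∀ p, (∀ w ∈ l, dist w p ≤ n / (n + 1) * δ) → ∀ w ∈ l', dist w p ≤ n / (n + 1) * δ) →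
      F l' = 0) :
    OrderedCochain.subdivision barycenter F l = 0 := by
  induction l using OrderedCochain.length_induction generalizing F with
  | nil =>
    rw [OrderedCochain.subdivision_nil]
    exact hF [] rfl (by simp [MeshLE]) (by simp)
  | cons v l ih =>
    have hln : l.length ≤ n := by simpa using hl
    have hv w (hw : w ∈ v :: l) := hmesh.dist_barycenter_le hδ hln hw
    rw [OrderedCochain.subdivision_cons, OrderedCochain.coboundary_congr (G := 0), map_zero,
      Pi.zero_apply]
    intro l' hsub hlen
    have hmesh_sub : MeshLE δ l' := fun x hx y hy => hmesh x (hsub.subset hx) y (hsub.subset hy)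
    refine ih l' hsub hlen (by lia) hmesh_sub fun l'' hlen' hmesh' hball => ?_
    have hv' := hball _ fun w hw => hv w (hsub.subset hw)
    refine hF _ (by rw [List.length_cons, hlen', hlen]) ?_ ?_
    · intro x hx y hy
      rcases List.mem_cons.1 hx with rfl | hx <;> rcases List.mem_cons.1 hy with rfl | hy
      · rw [dist_self]; positivity
      · rw [dist_comm]; exact hv' y hy
      · exact hv' x hx
      · exact hmesh' x hx y hy
    · intro p hp w hw
      rcases List.mem_cons.1 hw with rfl | hw
      · exact dist_barycenter_le hp
      · exact hball p (fun x hx => hp x (hsub.subset hx)) w hw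

lemma subdivision_pow_eq_zero_of_meshLE {i : ℕ} (hδ : 0 ≤ δ) {F : OrderedCochain (GeomSimplex N)}
    (hF : ∀ l, l.length ≤ n + 1 → MeshLE (((n : ℝ) / (n + 1)) ^ i * δ) l → F l = 0)
    {l : List (GeomSimplex N)} (hl : l.length ≤ n + 1) (hmesh : MeshLE δ l) :
    (OrderedCochain.subdivision barycenter ^ i) F l = 0 := by
  induction i generalizing δ l with
  | zero => exact hF l hl (by simpa using hmesh)
  | succ i ih =>
    rw [pow_succ']
    refine subdivision_eq_zero_of_meshLE hδ hl hmesh fun l' hlen hmesh' _ => ?_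
    exact ih (by positivity) (by simpa only [pow_succ, mul_assoc] using hF) (by lia) hmesh'

lemma dist_geomSimplex_le_one (x y : GeomSimplex N) : dist x y ≤ 1 := by
  rw [Subtype.dist_eq]
  exact (dist_pi_le_iff zero_le_one).2 fun i => Real.dist_le_of_mem_Icc_01
    (mem_Icc_of_mem_stdSimplex x.2 i) (mem_Icc_of_mem_stdSimplex y.2 i)

lemma eventually_subdivision_pow_eq_zero (n : ℕ) (hδ : 0 < δ)
    {F : OrderedCochain (GeomSimplex N)} (hF : ∀ l, MeshLE δ l → F l = 0) :
    ∃ m, ∀ i ≥ m, ∀ l : List (GeomSimplex N), l.length ≤ n + 1 →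
      (OrderedCochain.subdivision barycenter ^ i) F l = 0 := by
  have hr : (n : ℝ) / (n + 1) < 1 := by
    rw [div_lt_one (by positivity)]; linarith
  obtain ⟨m, hm⟩ := exists_pow_lt_of_lt_one hδ hr
  refine ⟨m, fun i hi l hl => subdivision_pow_eq_zero_of_meshLE (n := n) zero_le_one
    (fun l _ hmesh => hF l fun x hx y hy => (hmesh x hx y hy).trans ?_) hl
    fun x _ y _ => dist_geomSimplex_le_one x y⟩
  rw [mul_one]
  exact (pow_le_pow_of_le_one (by positivity) hr.le hi).trans hm.le

end Mesh

namespace SingularCochain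

section Excision

variable {X Y : Type*} [TopologicalSpace X] [TopologicalSpace Y] {A B : Set X} {N : ℕ}
  {f g : SingularCochain X}

/-- The restriction of singular cochains to a subspace. -/
def restrict (A : Set X) : SingularCochain X →ₗ[ZMod 2] SingularCochain A :=
  pullback ⟨Subtype.val, continuous_subtype_val⟩

lemma restrict_eq_iff : restrict A f = restrict A g ↔
    ∀ N (σ : C(GeomSimplex N, X)), (∀ x, σ x ∈ A) → f N σ = g N σ := by
  constructor
  · intro h N σ hσ
    exact congrFun (congrFun h N) ⟨fun x => ⟨σ x, hσ x⟩, by fun_prop⟩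
  · intro h
    ext N σ
    exact h N _ fun x => (σ x).2

lemma restrict_eq_zero_iff : restrict A f = 0 ↔
    ∀ N (σ : C(GeomSimplex N, X)), (∀ x, σ x ∈ A) → f N σ = 0 := by
  rw [← map_zero (restrict A), restrict_eq_iff]
  rfl

lemma restrict_eq_of_subset (hAB : A ⊆ B) (h : restrict B f = restrict B g) :
    restrict A f = restrict A g :=
  restrict_eq_iff.2 fun N σ hσ => restrict_eq_iff.1 h N σ fun x => hAB (hσ x)

lemma eval_eq_zero_of_mesh_small (hA : IsOpen A) (hB : IsOpen B) (fA : restrict A f = 0)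
    (fB : restrict B f = 0) {σ : C(GeomSimplex N, X)} (hσ : ∀ x, σ x ∈ A ∪ B) :
    ∃ δ > 0, ∀ l, MeshLE δ l → eval σ f l = 0 := by
  obtain ⟨δ, hδ, hL⟩ := lebesgue_number_lemma_of_metric
    (c := fun b : Bool => σ ⁻¹' if b then A else B) isCompact_univ
    (fun b => IsOpen.preimage σ.continuous (by cases b <;> assumption))
    fun x _ => Set.mem_iUnion.2 <| (hσ x).elim (fun h => ⟨true, h⟩) fun h => ⟨false, h⟩
  refine ⟨δ / 2, by positivity, fun l hl => ?_⟩
  cases l with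
  | nil => rfl
  | cons v l =>
    obtain ⟨b, hb⟩ := hL v trivial
    obtain ⟨u, hu⟩ := exists_ofFn_eq_cons v l
    have hball x : affine u x ∈ Metric.ball v δ :=
      affine_mem_of_convex (convex_ball v.1 δ) (fun i => (hl (u i)
        (hu ▸ List.mem_ofFn.2 ⟨i, rfl⟩) v List.mem_cons_self).trans_lt (by linarith)) x
    rw [← hu, eval_ofFn]
    cases b with
    | true => exact restrict_eq_zero_iff.1 fA _ (σ.comp (affine u)) fun x => hb (hball x)
    | false => exact restrict_eq_zero_iff.1 fB _ (σ.comp (affine u)) fun x => hb (hball x)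

lemma eval_subdivision_pow (i : ℕ) (σ : C(GeomSimplex N, X)) (f : SingularCochain X) :
    eval σ ((subdivision ^ i) f) =
      (OrderedCochain.subdivision barycenter ^ i) (eval σ f) := by
  induction i generalizing f with
  | zero => rfl
  | succ i ih => rw [pow_succ, pow_succ, Module.End.mul_apply, ih, eval_subdivision]; rfl

lemma eventually_eval_subdivision_pow_eq_zero (hA : IsOpen A) (hB : IsOpen B)
    (fA : restrict A f = 0) (fB : restrict B f = 0) (n : ℕ) {σ : C(GeomSimplex N, X)}
    (hσ : ∀ x, σ x ∈ A ∪ B) :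
    ∃ m, ∀ i ≥ m, ∀ l : List (GeomSimplex N), l.length ≤ n + 1 →
      eval σ ((subdivision ^ i) f) l = 0 := by
  obtain ⟨δ, hδ, hf⟩ := eval_eq_zero_of_mesh_small hA hB fA fB hσ
  simp only [eval_subdivision_pow]
  exact eventually_subdivision_pow_eq_zero n hδ hf

/-- The chain homotopy between the identity and the `m`-th iterate of barycentric subdivision. -/
noncomputable def iteratedHomotopy (m : ℕ) : Module.End (ZMod 2) (SingularCochain X) :=
  ∑ i ∈ range m, subdivision ^ i * subdivisionHomotopy

lemma coboundary_iteratedHomotopy (m : ℕ) :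
    (coboundary * iteratedHomotopy m + iteratedHomotopy m * coboundary :
      Module.End (ZMod 2) (SingularCochain X)) = 1 + subdivision ^ m := by
  induction m with
  | zero => simp [iteratedHomotopy, ZModModule.add_self]
  | succ m ih =>
    have hcomm : (coboundary * subdivision ^ m : Module.End (ZMod 2) (SingularCochain X)) =
        subdivision ^ m * coboundary :=
      (Commute.pow_right (subdivision_coboundary (X := X)).symm m :)
    calc coboundary * iteratedHomotopy (m + 1) + iteratedHomotopy (m + 1) * coboundary
        = coboundary * iteratedHomotopy m + iteratedHomotopy m * coboundary + subdivision ^ m *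
            (coboundary * subdivisionHomotopy + subdivisionHomotopy * coboundary) := by
          rw [iteratedHomotopy, sum_range_succ, ← iteratedHomotopy, mul_add, ← mul_assoc, hcomm]
          noncomm_ring
      _ = 1 + subdivision ^ (m + 1) + (subdivision ^ m + subdivision ^ m) := by
          rw [ih, coboundary_subdivisionHomotopy, pow_succ]
          noncomm_ring
      _ = 1 + subdivision ^ (m + 1) := by rw [ZModModule.add_self, add_zero]

lemma pullback_subdivision_pow (φ : C(X, Y)) (i : ℕ) (f : SingularCochain Y) :
    pullback φ ((subdivision ^ i) f) = (subdivision ^ i) (pullback φ f) := by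
  induction i generalizing f with
  | zero => rfl
  | succ i ih => rw [pow_succ, pow_succ, Module.End.mul_apply, ih, pullback_subdivision]; rfl

lemma pullback_iteratedHomotopy (φ : C(X, Y)) (m : ℕ) (f : SingularCochain Y) :
    pullback φ (iteratedHomotopy m f) = iteratedHomotopy m (pullback φ f) := by
  simp only [iteratedHomotopy, LinearMap.sum_apply, map_sum, Module.End.mul_apply,
    pullback_subdivision_pow, pullback_subdivisionHomotopy]

/-- The limit of the iterated homotopies. The sum is finite on simplices in `A ∪ B` if `f` vanishes
on the open sets `A` and `B`. -/
noncomputable def limitHomotopy (f : SingularCochain X) : SingularCochain X :=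
  fun N σ => ∑ᶠ i, (subdivision ^ i) (subdivisionHomotopy f) N σ

lemma restrict_limitHomotopy (fA : restrict A f = 0) : restrict A (limitHomotopy f) = 0 := by
  refine restrict_eq_zero_iff.2 fun N σ hσ => finsum_eq_zero_of_forall_eq_zero fun i => ?_
  refine (restrict_eq_zero_iff (A := A)).1 ?_ N σ hσ
  rw [restrict, pullback_subdivision_pow, pullback_subdivisionHomotopy, ← restrict, fA,
    map_zero, map_zero]

lemma eval_limitHomotopy {σ : C(GeomSimplex N, X)} {m : ℕ} {l : List (GeomSimplex N)}
    (h : ∀ i ≥ m, eval σ ((subdivision ^ i) (subdivisionHomotopy f)) l = 0) :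
    eval σ (limitHomotopy f) l = eval σ (iteratedHomotopy m f) l := by
  cases l with
  | nil => rfl
  | cons v l =>
    simp only [iteratedHomotopy, LinearMap.sum_apply, map_sum, Module.End.mul_apply,
      Finset.sum_apply]
    refine finsum_eq_sum_of_support_subset _ fun i hi => ?_
    rw [Finset.coe_range, Set.mem_Iio]
    by_contra! him
    exact hi (h i him)

theorem exists_eq_coboundary_of_restrict_eq_zero (hA : IsOpen A) (hB : IsOpen B)
    (hf : restrict (A ∪ B) (coboundary f) = 0) (fA : restrict A f = 0) (fB : restrict B f = 0) :
    ∃ g, restrict A g = 0 ∧ restrict B g = 0 ∧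
      restrict (A ∪ B) f = restrict (A ∪ B) (coboundary g) := by
  refine ⟨limitHomotopy f, restrict_limitHomotopy fA, restrict_limitHomotopy fB, ?_⟩
  refine restrict_eq_iff.2 fun N σ hσ => ?_
  have hvanish {C : Set X} (fC : restrict C f = 0) : restrict C (subdivisionHomotopy f) = 0 := by
    rw [restrict, pullback_subdivisionHomotopy, ← restrict, fC, map_zero]
  obtain ⟨m, hm⟩ := eventually_eval_subdivision_pow_eq_zero hA hB fA fB N hσ
  obtain ⟨m', hm'⟩ := eventually_eval_subdivision_pow_eq_zero hA hB (hvanish fA) (hvanish fB) N hσ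
  set k := max m m'
  have hlim : coboundary (limitHomotopy f) N σ = coboundary (iteratedHomotopy k f) N σ := by
    rw [← eval_vertices σ (coboundary (limitHomotopy f)),
      ← eval_vertices σ (coboundary (iteratedHomotopy k f)), eval_coboundary, eval_coboundary]
    refine OrderedCochain.coboundary_congr fun l _ hl => eval_limitHomotopy fun i hi => ?_
    rw [length_vertices] at hl
    exact hm' i (le_of_max_le_right hi) l (by lia)
  have hsub : (subdivision ^ k) f N σ = 0 :=
    (eval_vertices σ _).symm.trans (hm k (le_max_left _ _) _ (length_vertices N).le)
  have hclosed : iteratedHomotopy k (coboundary f) N σ = 0 := by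
    refine (restrict_eq_zero_iff (A := A ∪ B)).1 ?_ N σ hσ
    rw [restrict, pullback_iteratedHomotopy, ← restrict, hf, map_zero]
  have := congrFun (congrFun (LinearMap.congr_fun (coboundary_iteratedHomotopy k) f) N) σ
  simp only [LinearMap.add_apply, Module.End.mul_apply, Pi.add_apply, hclosed, hsub, add_zero,
    Module.End.one_apply] at this
  rw [hlim, this]

end Excision

section Cocycles

variable {X : Type*} [TopologicalSpace X] {A B : Set X} {j : ℕ} {f g : SingularCochain X}

lemma restrict_coboundary (f : SingularCochain X) :
    restrict A (coboundary f) = coboundary (restrict A f) :=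
  pullback_coboundary _ f

lemma restrict_cup (f g : SingularCochain X) :
    restrict A (cup f g) = cup (restrict A f) (restrict A g) :=
  pullback_cup _ f g

lemma restrict_component (f : SingularCochain X) :
    restrict A (component j f) = component j (restrict A f) :=
  pullback_component _ f

/-- The singular cochains of `X` that restrict to cocycles on the subspace `A`. -/
def cocycles (A : Set X) : Submodule (ZMod 2) (SingularCochain X) :=
  LinearMap.ker (coboundary ∘ₗ restrict A)

/-- The singular cochains of `X` that restrict to coboundaries on the subspace `A`. Every cochain
on `A` extends to `X`, so these are the cochains agreeing on `A` with a coboundary of `X`. -/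
def coboundaries (A : Set X) : Submodule (ZMod 2) (SingularCochain X) :=
  LinearMap.range coboundary ⊔ LinearMap.ker (restrict A)

lemma mem_cocycles : f ∈ cocycles A ↔ coboundary (restrict A f) = 0 :=
  Iff.rfl

lemma mem_coboundaries : f ∈ coboundaries A ↔ ∃ g, restrict A f = restrict A (coboundary g) := by
  rw [coboundaries, Submodule.mem_sup]
  constructor
  · rintro ⟨_, ⟨g, rfl⟩, h, hh, rfl⟩
    exact ⟨g, by rw [map_add, LinearMap.mem_ker.1 hh, add_zero]⟩
  · rintro ⟨g, hg⟩
    exact ⟨coboundary g, ⟨g, rfl⟩, f - coboundary g,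
      by rw [LinearMap.mem_ker, map_sub, hg, sub_self], add_sub_cancel _ _⟩

lemma cocycles_mono (hAB : A ⊆ B) : cocycles B ≤ cocycles A := fun f hf => by
  rw [mem_cocycles, ← restrict_coboundary] at hf ⊢
  rw [restrict_eq_of_subset hAB (hf.trans (map_zero _).symm), map_zero]

lemma coboundary_mem_cocycles (f : SingularCochain X) : coboundary f ∈ cocycles A := by
  rw [mem_cocycles, ← restrict_coboundary, coboundary_coboundary, map_zero]

lemma unit_mem_cocycles : unit ∈ cocycles A := by
  rw [mem_cocycles, ← restrict_coboundary, coboundary_unit, map_zero]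

lemma mem_cocycles_congr (h : restrict A f = restrict A g) : f ∈ cocycles A ↔ g ∈ cocycles A := by
  rw [mem_cocycles, mem_cocycles, h]

lemma component_mem_cocycles (hf : f ∈ cocycles A) : component j f ∈ cocycles A := by
  rw [mem_cocycles] at hf ⊢
  rw [restrict_component, coboundary_component, hf, map_zero]

lemma cup_mem_cocycles (hf : f ∈ cocycles A) (hg : g ∈ cocycles A) : cup f g ∈ cocycles A := by
  rw [mem_cocycles] at hf hg ⊢
  simp only [restrict_cup, coboundary_cup, hf, hg, map_zero, LinearMap.zero_apply, add_zero]

lemma coboundary_mem_coboundaries (f : SingularCochain X) : coboundary f ∈ coboundaries A :=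
  Submodule.mem_sup_left ⟨f, rfl⟩

lemma mem_coboundaries_of_restrict_eq_zero (h : restrict A f = 0) : f ∈ coboundaries A :=
  Submodule.mem_sup_right h

lemma mem_coboundaries_congr (h : restrict A f = restrict A g) :
    f ∈ coboundaries A ↔ g ∈ coboundaries A := by
  rw [mem_coboundaries, mem_coboundaries, h]

lemma coboundaries_mono (hAB : A ⊆ B) : coboundaries B ≤ coboundaries A :=
  sup_le_sup_left (fun _ hf => (restrict_eq_of_subset hAB (hf.trans (map_zero _).symm)).trans
    (map_zero _)) _

lemma exists_homogeneous_of_mem_coboundaries (hf : f ∈ homogeneous (j + 1))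
    (h : f ∈ coboundaries A) :
    ∃ g ∈ homogeneous j, restrict A f = restrict A (coboundary g) := by
  obtain ⟨g, hg⟩ := mem_coboundaries.1 h
  refine ⟨component j g, component_mem_homogeneous j g, ?_⟩
  rw [coboundary_component, restrict_component, ← hg, ← restrict_component, component_eq_self hf]

lemma restrict_component_zero_eq_zero (h : f ∈ coboundaries A) :
    restrict A (component 0 f) = 0 := by
  obtain ⟨g, hg⟩ := mem_coboundaries.1 h
  rw [restrict_component, hg, ← restrict_component, component_zero_coboundary, map_zero]

lemma restrict_eq_zero_of_mem_coboundaries (hf : f ∈ homogeneous 0) (h : f ∈ coboundaries A) :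
    restrict A f = 0 := by
  rw [← component_eq_self hf, restrict_component_zero_eq_zero h]

lemma component_mem_coboundaries (h : f ∈ coboundaries A) : component j f ∈ coboundaries A := by
  cases j with
  | zero => exact mem_coboundaries_of_restrict_eq_zero (restrict_component_zero_eq_zero h)
  | succ j =>
    obtain ⟨g, hg⟩ := mem_coboundaries.1 h
    exact mem_coboundaries.2 ⟨component j g, by
      rw [coboundary_component, restrict_component, restrict_component, hg]⟩

lemma cup_mem_coboundaries_of_left (hf : f ∈ coboundaries A) (hg : g ∈ cocycles A) :
    cup f g ∈ coboundaries A := by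
  obtain ⟨k, hk⟩ := mem_coboundaries.1 hf
  refine mem_coboundaries.2 ⟨cup k g, ?_⟩
  simp only [restrict_cup, restrict_coboundary, coboundary_cup, mem_cocycles.1 hg, hk, map_add,
    map_zero, add_zero]

lemma cup_mem_coboundaries_of_right (hf : f ∈ cocycles A) (hg : g ∈ coboundaries A) :
    cup f g ∈ coboundaries A := by
  obtain ⟨k, hk⟩ := mem_coboundaries.1 hg
  refine mem_coboundaries.2 ⟨cup f k, ?_⟩
  simp only [restrict_cup, restrict_coboundary, coboundary_cup, mem_cocycles.1 hf, hk, map_add,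
    map_zero, LinearMap.zero_apply, zero_add]

section MayerVietoris

open Classical in
lemma exists_restrict_eq (h : restrict (A ∩ B) f = restrict (A ∩ B) g) :
    ∃ k, restrict A k = restrict A f ∧ restrict B k = restrict B g := by
  refine ⟨fun N σ => if ∀ x, σ x ∈ A then f N σ else g N σ,
    restrict_eq_iff.2 fun N σ hσ => if_pos hσ, restrict_eq_iff.2 fun N σ hσ => ?_⟩
  split_ifs with hA
  · exact restrict_eq_iff.1 h N σ fun x => ⟨hA x, hσ x⟩
  · rfl

lemma mem_coboundaries_union_of_restrict_eq_zero (hA : IsOpen A) (hB : IsOpen B)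
    (hf : f ∈ cocycles (A ∪ B)) (fA : restrict A f = 0) (fB : restrict B f = 0) :
    f ∈ coboundaries (A ∪ B) := by
  obtain ⟨g, -, -, hg⟩ := exists_eq_coboundary_of_restrict_eq_zero hA hB
    ((restrict_coboundary f).trans hf) fA fB
  exact mem_coboundaries.2 ⟨g, hg⟩

lemma exists_cocycle_restrict_eq (hA : IsOpen A) (hB : IsOpen B) (hf : f ∈ cocycles A)
    (hg : g ∈ cocycles B) (hfg : restrict (A ∩ B) f = restrict (A ∩ B) g) :
    ∃ y ∈ cocycles (A ∪ B), restrict A y = restrict A f ∧ restrict B y = restrict B g := by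
  obtain ⟨k, kA, kB⟩ := exists_restrict_eq hfg
  obtain ⟨e, eA, eB, he⟩ := exists_eq_coboundary_of_restrict_eq_zero hA hB
    (f := coboundary k) (by rw [coboundary_coboundary, map_zero])
    (by rw [restrict_coboundary, kA, mem_cocycles.1 hf])
    (by rw [restrict_coboundary, kB, mem_cocycles.1 hg])
  refine ⟨k - e, ?_, by rw [map_sub, eA, sub_zero, kA], by rw [map_sub, eB, sub_zero, kB]⟩
  rw [mem_cocycles, ← restrict_coboundary, map_sub, map_sub, he, sub_self]

lemma exists_homogeneous_cocycle_restrict_eq (hA : IsOpen A) (hB : IsOpen B)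
    (jf : f ∈ homogeneous j) (jg : g ∈ homogeneous j) (hf : f ∈ cocycles A) (hg : g ∈ cocycles B)
    (hfg : restrict (A ∩ B) f = restrict (A ∩ B) g) :
    ∃ y ∈ homogeneous j, y ∈ cocycles (A ∪ B) ∧ restrict A y = restrict A f ∧
      restrict B y = restrict B g := by
  obtain ⟨y, hy, yA, yB⟩ := exists_cocycle_restrict_eq hA hB hf hg hfg
  refine ⟨component j y, component_mem_homogeneous j y, component_mem_cocycles hy, ?_, ?_⟩
  · rw [restrict_component, yA, ← restrict_component, component_eq_self jf]
  · rw [restrict_component, yB, ← restrict_component, component_eq_self jg]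

lemma exists_homogeneous_cocycle_of_sub_mem_coboundaries (hA : IsOpen A) (hB : IsOpen B)
    (jf : f ∈ homogeneous j) (jg : g ∈ homogeneous j) (hf : f ∈ cocycles A) (hg : g ∈ cocycles B)
    (hfg : f - g ∈ coboundaries (A ∩ B)) :
    ∃ y ∈ homogeneous j, y ∈ cocycles (A ∪ B) ∧ restrict A y = restrict A f ∧
      y - g ∈ coboundaries B := by
  obtain ⟨h, hh⟩ := mem_coboundaries.1 hfg
  obtain ⟨y, hy, yA, yB⟩ := exists_cocycle_restrict_eq hA hB (g := g + coboundary h) hf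
    (add_mem hg (coboundary_mem_cocycles h))
    (by rw [map_add, ← hh, map_sub, add_sub_cancel])
  refine ⟨component j y, component_mem_homogeneous j y, component_mem_cocycles hy, ?_, ?_⟩
  · rw [restrict_component, yA, ← restrict_component, component_eq_self jf]
  · rw [← component_eq_self jg, ← map_sub]
    refine component_mem_coboundaries (mem_coboundaries.2 ⟨h, ?_⟩)
    rw [map_sub, yB, map_add, add_sub_cancel_left]

lemma cup_mem_coboundaries_union (hA : IsOpen A) (hB : IsOpen B) (hf : f ∈ cocycles (A ∪ B))
    (hg : g ∈ cocycles (A ∪ B)) (fA : f ∈ coboundaries A) (gB : g ∈ coboundaries B) :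
    cup f g ∈ coboundaries (A ∪ B) := by
  obtain ⟨a, ha⟩ := mem_coboundaries.1 fA
  obtain ⟨b, hb⟩ := mem_coboundaries.1 gB
  have hf' : f - coboundary a ∈ cocycles (A ∪ B) := sub_mem hf (coboundary_mem_cocycles a)
  have hg' : g - coboundary b ∈ cocycles (A ∪ B) := sub_mem hg (coboundary_mem_cocycles b)
  have hfg : cup (f - coboundary a) (g - coboundary b) ∈ coboundaries (A ∪ B) := by
    refine mem_coboundaries_union_of_restrict_eq_zero hA hB (cup_mem_cocycles hf' hg') ?_ ?_
    · rw [restrict_cup, map_sub, ha, sub_self, map_zero, LinearMap.zero_apply]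
    · rw [restrict_cup, map_sub (restrict B) g, hb, sub_self, map_zero]
  have hsum : cup f g = cup (f - coboundary a) (g - coboundary b) + cup (coboundary a) g +
      cup (f - coboundary a) (coboundary b) := by
    simp only [map_sub, LinearMap.sub_apply]
    abel
  rw [hsum]
  exact add_mem (add_mem hfg (cup_mem_coboundaries_of_left (coboundary_mem_coboundaries a) hg))
    (cup_mem_coboundaries_of_right hf' (coboundary_mem_coboundaries b))

/-- The relation underlying the connecting homomorphism of the Mayer–Vietoris sequence of `A` and
`B`: it sends the class of `z` on `A ∩ B` to the class of `w` on `A ∪ B`. -/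
def IsConnecting (A B : Set X) (z w : SingularCochain X) : Prop :=
  ∃ a b, restrict A w = restrict A (coboundary a) ∧ restrict B w = restrict B (coboundary b) ∧
    restrict (A ∩ B) (a - b) = restrict (A ∩ B) z

namespace IsConnecting

variable {x z z' w w' : SingularCochain X}

lemma exists_of_cocycle (hA : IsOpen A) (hB : IsOpen B) (hj : z ∈ homogeneous j)
    (hz : z ∈ cocycles (A ∩ B)) :
    ∃ w ∈ homogeneous (j + 1), w ∈ cocycles (A ∪ B) ∧ IsConnecting A B z w := by
  obtain ⟨w, jw, hw, wA, wB⟩ := exists_homogeneous_cocycle_restrict_eq hA hB (g := 0)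
    (coboundary_mem_homogeneous hj) (zero_mem _) (coboundary_mem_cocycles z) (zero_mem _)
    (by rw [restrict_coboundary, mem_cocycles.1 hz, map_zero])
  exact ⟨w, jw, hw, z, 0, wA, by rw [wB, map_zero coboundary], by rw [sub_zero]⟩

lemma exists_of_mem_coboundaries (hj : w ∈ homogeneous (j + 1)) (wA : w ∈ coboundaries A)
    (wB : w ∈ coboundaries B) :
    ∃ z ∈ homogeneous j, z ∈ cocycles (A ∩ B) ∧ IsConnecting A B z w := by
  obtain ⟨a, ja, ha⟩ := exists_homogeneous_of_mem_coboundaries hj wA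
  obtain ⟨b, jb, hb⟩ := exists_homogeneous_of_mem_coboundaries hj wB
  refine ⟨a - b, sub_mem ja jb, ?_, a, b, ha, hb, rfl⟩
  rw [mem_cocycles, ← restrict_coboundary, map_sub, map_sub,
    ← restrict_eq_of_subset Set.inter_subset_left ha,
    ← restrict_eq_of_subset Set.inter_subset_right hb, sub_self]

lemma exists_eq_sub (h : IsConnecting A B z w) (hj : z ∈ homogeneous j)
    (hw : w ∈ coboundaries (A ∪ B)) :
    ∃ a ∈ homogeneous j, ∃ b ∈ homogeneous j, a ∈ cocycles A ∧ b ∈ cocycles B ∧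
      restrict (A ∩ B) (a - b) = restrict (A ∩ B) z := by
  obtain ⟨a, b, ha, hb, hab⟩ := h
  obtain ⟨g, hg⟩ := mem_coboundaries.1 hw
  have ca : a - g ∈ cocycles A := by
    rw [mem_cocycles, ← restrict_coboundary, map_sub, map_sub, ← ha,
      restrict_eq_of_subset Set.subset_union_left hg, sub_self]
  have cb : b - g ∈ cocycles B := by
    rw [mem_cocycles, ← restrict_coboundary, map_sub, map_sub, ← hb,
      restrict_eq_of_subset Set.subset_union_right hg, sub_self]
  refine ⟨component j (a - g), component_mem_homogeneous _ _, component j (b - g),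
    component_mem_homogeneous _ _, component_mem_cocycles ca, component_mem_cocycles cb, ?_⟩
  rw [← map_sub, sub_sub_sub_cancel_right, restrict_component, hab, ← restrict_component,
    component_eq_self hj]

lemma mem_coboundaries (h : IsConnecting A B z w) (hA : IsOpen A) (hB : IsOpen B)
    (hw : w ∈ cocycles (A ∪ B)) (hz : z ∈ coboundaries (A ∩ B)) : w ∈ coboundaries (A ∪ B) := by
  obtain ⟨a, b, ha, hb, hab⟩ := h
  obtain ⟨k, hk⟩ := SingularCochain.mem_coboundaries.1 hz
  obtain ⟨g, gA, gB⟩ := exists_restrict_eq (f := a) (g := b + coboundary k) (A := A) (B := B)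
    (by rw [map_add, ← hk, ← hab, map_sub, add_sub_cancel])
  have hwg : w - coboundary g ∈ coboundaries (A ∪ B) := by
    refine mem_coboundaries_union_of_restrict_eq_zero hA hB
      (sub_mem hw (coboundary_mem_cocycles g)) ?_ ?_
    · rw [map_sub, ha, restrict_coboundary g, gA, ← restrict_coboundary, sub_self]
    · rw [map_sub, hb, restrict_coboundary g, gB, ← restrict_coboundary, map_add,
        coboundary_coboundary, add_zero, sub_self]
  simpa only [sub_add_cancel] using add_mem hwg (coboundary_mem_coboundaries g)

lemma cup (h : IsConnecting A B z w) (xA : x ∈ cocycles A) (xB : x ∈ cocycles B) :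
    IsConnecting A B (cup z x) (cup w x) := by
  obtain ⟨a, b, ha, hb, hab⟩ := h
  refine ⟨SingularCochain.cup a x, SingularCochain.cup b x, ?_, ?_, ?_⟩
  · simp only [restrict_cup, restrict_coboundary, coboundary_cup, mem_cocycles.1 xA, ha, map_add,
      map_zero, add_zero]
  · simp only [restrict_cup, restrict_coboundary, coboundary_cup, mem_cocycles.1 xB, hb, map_add,
      map_zero, add_zero]
  · rw [← LinearMap.sub_apply, ← map_sub, restrict_cup, hab, ← restrict_cup]

lemma sub_smul (h : IsConnecting A B z w) (h' : IsConnecting A B z' w') (c : ZMod 2) :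
    IsConnecting A B (z - c • z') (w - c • w') := by
  obtain ⟨a, b, ha, hb, hab⟩ := h
  obtain ⟨a', b', ha', hb', hab'⟩ := h'
  refine ⟨a - c • a', b - c • b', ?_, ?_, ?_⟩
  · simp only [map_sub, map_smul, ha, ha']
  · simp only [map_sub, map_smul, hb, hb']
  · rw [map_sub _ z, map_smul _ _ z', ← hab, ← hab']
    simp only [map_sub, map_smul]
    module

lemma sub_cocycle (h : IsConnecting A B z w) (hx : x ∈ cocycles A) :
    IsConnecting A B (z - x) w := by
  obtain ⟨a, b, ha, hb, hab⟩ := h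
  refine ⟨a - x, b, ?_, hb, ?_⟩
  · rw [map_sub, map_sub, restrict_coboundary x, mem_cocycles.1 hx, sub_zero, ha]
  · rw [sub_right_comm, map_sub, hab, map_sub]

end IsConnecting

end MayerVietoris

end Cocycles

section Subspaces

variable {X Y : Type*} [TopologicalSpace X] [TopologicalSpace Y] {A : Set X} {B : Set Y} {j : ℕ}
  {f : SingularCochain X}

open Classical in
lemma restrict_surjective (A : Set X) : Function.Surjective (restrict A) := fun g =>
  ⟨fun N σ => if h : ∀ x, σ x ∈ A then g N ⟨fun x => ⟨σ x, h x⟩, by fun_prop⟩ else 0,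
    funext fun _ => funext fun σ => dif_pos fun x => (σ x).2⟩

lemma restrict_univ_injective :
    Function.Injective (restrict (Set.univ : Set X)) := fun _ _ h =>
  funext fun N => funext fun σ => restrict_eq_iff.1 h N σ fun _ => Set.mem_univ _

lemma mem_cocycles_univ : f ∈ cocycles Set.univ ↔ coboundary f = 0 := by
  rw [mem_cocycles, ← restrict_coboundary, ← map_zero (restrict Set.univ),
    restrict_univ_injective.eq_iff]

lemma mem_coboundaries_univ : f ∈ coboundaries Set.univ ↔ ∃ g, f = coboundary g := by
  simp only [mem_coboundaries, restrict_univ_injective.eq_iff]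

lemma restrict_mem_cocycles_univ : restrict A f ∈ cocycles Set.univ ↔ f ∈ cocycles A :=
  mem_cocycles_univ

lemma restrict_mem_coboundaries_univ :
    restrict A f ∈ coboundaries Set.univ ↔ f ∈ coboundaries A := by
  rw [mem_coboundaries_univ, mem_coboundaries, (restrict_surjective A).exists]
  simp only [restrict_coboundary]

lemma pullback_mem_cocycles {φ : C(Y, X)} (hφ : Set.MapsTo φ B A) (hf : f ∈ cocycles A) :
    pullback φ f ∈ cocycles B := by
  rw [mem_cocycles, ← restrict_coboundary, restrict_eq_zero_iff] at hf ⊢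
  rw [← pullback_coboundary]
  exact fun N σ hσ => hf N (φ.comp σ) fun x => hφ (hσ x)

lemma pullback_mem_coboundaries {φ : C(Y, X)} (hφ : Set.MapsTo φ B A) (hf : f ∈ coboundaries A) :
    pullback φ f ∈ coboundaries B := by
  obtain ⟨g, hg⟩ := mem_coboundaries.1 hf
  refine mem_coboundaries.2 ⟨pullback φ g, restrict_eq_iff.2 fun N σ hσ => ?_⟩
  rw [← pullback_coboundary]
  exact restrict_eq_iff.1 hg N (φ.comp σ) fun x => hφ (hσ x)

/-- The singular cochains of `X` that restrict on `A` to the sum of a coboundary and a multiple of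
the unit cocycle, so that cocycles modulo these form the reduced cohomology of `A`. -/
def reducedCoboundaries (A : Set X) : Submodule (ZMod 2) (SingularCochain X) :=
  coboundaries A ⊔ Submodule.span (ZMod 2) {unit}

lemma mem_reducedCoboundaries :
    f ∈ reducedCoboundaries A ↔ ∃ c : ZMod 2, f - c • unit ∈ coboundaries A := by
  rw [reducedCoboundaries, Submodule.mem_sup]
  constructor
  · rintro ⟨g, hg, _, hc, rfl⟩
    obtain ⟨c, rfl⟩ := Submodule.mem_span_singleton.1 hc
    exact ⟨c, by rwa [add_sub_cancel_right]⟩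
  · rintro ⟨c, hc⟩
    exact ⟨_, hc, _, Submodule.mem_span_singleton.2 ⟨c, rfl⟩, sub_add_cancel _ _⟩

lemma mem_coboundaries_of_mem_reducedCoboundaries (hf : f ∈ homogeneous (j + 1))
    (h : f ∈ reducedCoboundaries A) : f ∈ coboundaries A := by
  obtain ⟨c, hc⟩ := mem_reducedCoboundaries.1 h
  have := component_mem_coboundaries (j := j + 1) hc
  rwa [map_sub, map_smul, component_eq_self hf,
    component_eq_zero unit_mem_homogeneous (Nat.succ_ne_zero j), smul_zero, sub_zero] at this

lemma restrict_mem_reducedCoboundaries_univ :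
    restrict A f ∈ reducedCoboundaries Set.univ ↔ f ∈ reducedCoboundaries A := by
  simp only [mem_reducedCoboundaries, ← restrict_mem_coboundaries_univ (A := A), map_sub, map_smul]
  rfl

end Subspaces

section Homotopy

variable {X Y D : Type*} [TopologicalSpace X] [TopologicalSpace Y] [TopologicalSpace D]
  [HasAffineSimplices D] {φ ψ : C(X, Y)}

/-- The chain homotopy between the pullbacks along two homotopic maps. -/
noncomputable def prism (H : φ.Homotopy ψ) (f : SingularCochain Y) : SingularCochain X :=
  fun N σ => OrderedCochain.prism (Prod.mk (0 : unitInterval)) (Prod.mk 1)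
    (eval (H.toContinuousMap.comp ((ContinuousMap.id _).prodMap σ)) f) (vertices N)

lemma isAffineMap_prodMk (t : unitInterval) :
    IsAffineMap ((ContinuousMap.const D t).prodMk (ContinuousMap.id D)) := fun _ _ =>
  ContinuousMap.ext fun x => Prod.ext (affine_const t x).symm rfl

lemma isAffineMap_prodMap_affine {N : ℕ} (u : Fin (N + 1) → D) :
    IsAffineMap ((ContinuousMap.id unitInterval).prodMap (affine u)) := fun _ w =>
  ContinuousMap.ext fun x => Prod.ext rfl (affine_convexSimplex u (fun i => (w i).2) x)

lemma eval_prism (H : φ.Homotopy ψ) (f : SingularCochain Y) (σ : C(D, X)) :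
    eval σ (prism H f) = OrderedCochain.prism (Prod.mk (0 : unitInterval)) (Prod.mk 1)
      (eval (H.toContinuousMap.comp ((ContinuousMap.id _).prodMap σ)) f) :=
  eval_eq_of_apply rfl fun N u => by
    let V := (ContinuousMap.id unitInterval).prodMap (affine u)
    calc prism H f N (σ.comp (affine u))
      _ = OrderedCochain.prism (Prod.mk 0) (Prod.mk 1)
            (eval ((H.toContinuousMap.comp ((ContinuousMap.id _).prodMap σ)).comp V) f)
            (vertices N) := rfl
      _ = OrderedCochain.comap (affine u) (OrderedCochain.prism (Prod.mk 0) (Prod.mk 1)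
            (eval (H.toContinuousMap.comp ((ContinuousMap.id _).prodMap σ)) f)) (vertices N) := by
          rw [eval_comp _ (isAffineMap_prodMap_affine u), OrderedCochain.prism_comap,
            OrderedCochain.comap_prism]
          rfl
      _ = _ := by rw [OrderedCochain.comap_apply, map_vertices]

lemma coboundary_prism (H : φ.Homotopy ψ) (f : SingularCochain Y) :
    coboundary (prism H f) + prism H (coboundary f) = pullback φ f + pullback ψ f := by
  refine ext_eval fun N σ => ?_
  simp only [map_add, eval_coboundary, eval_prism, OrderedCochain.coboundary_prism, eval_pullback]
  have h (t : unitInterval) :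
      OrderedCochain.comap (Prod.mk t)
        (eval (H.toContinuousMap.comp ((ContinuousMap.id _).prodMap σ)) f) =
      eval ((H.curry t).comp σ) f :=
    (eval_comp _ (isAffineMap_prodMk t) f).symm
  have h0 : H.curry 0 = φ := ContinuousMap.ext H.apply_zero
  have h1 : H.curry 1 = ψ := ContinuousMap.ext H.apply_one
  rw [h, h, h0, h1]

lemma pullback_sub_pullback_mem_coboundaries (h : φ.Homotopic ψ) {f : SingularCochain Y}
    (hf : f ∈ cocycles Set.univ) : pullback φ f - pullback ψ f ∈ coboundaries Set.univ := by
  obtain ⟨H⟩ := h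
  have hH := coboundary_prism H f
  have h0 : prism H (0 : SingularCochain Y) = 0 := ext_eval fun N σ => by
    rw [eval_prism, map_zero, OrderedCochain.prism_zero, map_zero]
  rw [mem_cocycles_univ.1 hf, h0, add_zero] at hH
  exact mem_coboundaries_univ.2 ⟨prism H f, by rw [hH, ZModModule.sub_eq_add]⟩

end Homotopy

section Contractible

variable {X : Type*} [TopologicalSpace X] {A : Set X} {N : ℕ}

lemma eval_of_subsingleton [Subsingleton X] {D : Type*} [TopologicalSpace D] [HasAffineSimplices D]
    (σ : C(D, X)) (τ : C(GeomSimplex N, X)) (f : SingularCochain X) {l : List D}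
    (hl : l.length = N + 1) : eval σ f l = f N τ := by
  obtain ⟨v, l, rfl⟩ := List.exists_cons_of_length_eq_add_one hl
  obtain rfl : l.length = N := by simpa using hl
  exact congrArg _ (ContinuousMap.ext fun _ => Subsingleton.elim _ _)

lemma coboundary_apply_of_subsingleton [Subsingleton X] (σ : C(GeomSimplex (N + 1), X))
    (τ : C(GeomSimplex N, X)) (f : SingularCochain X) :
    coboundary f (N + 1) σ = N * f N τ := by
  rw [← eval_vertices σ (coboundary f), eval_coboundary, OrderedCochain.coboundary_apply,
    length_vertices, sum_congr rfl fun i hi =>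
      eval_of_subsingleton σ τ f (l := (vertices _).eraseIdx i) ?_]
  · have h2 : (2 : ZMod 2) = 0 := CharTwo.two_eq_zero
    rw [sum_const, card_range, nsmul_eq_mul]
    push_cast
    linear_combination f N τ * h2
  · rw [List.length_eraseIdx_of_lt (by simpa only [length_vertices, Finset.mem_range] using hi),
      length_vertices]
    rfl

-- On a point, shifting degrees is a contraction of the reduced cochain complex.
lemma cocycles_le_reducedCoboundaries_of_subsingleton [Subsingleton X] (p : X) :
    cocycles (Set.univ : Set X) ≤ reducedCoboundaries Set.univ := fun f hf => by
  let pt N : C(GeomSimplex N, X) := ContinuousMap.const _ p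
  have hpt {N} (σ : C(GeomSimplex N, X)) : σ = pt N :=
    ContinuousMap.ext fun _ => Subsingleton.elim _ _
  let g : SingularCochain X := fun N _ => f (N + 1) (pt (N + 1))
  refine mem_reducedCoboundaries.2 ⟨f 0 (pt 0), mem_coboundaries_univ.2
    ⟨g, funext fun N => funext fun σ => ?_⟩⟩
  rw [hpt σ]
  cases N with
  | zero =>
    have hg : coboundary g 0 = 0 := by
      simpa [component] using congrFun (component_zero_coboundary g) 0
    simp [hg, unit]
  | succ N =>
    have hf' := coboundary_apply_of_subsingleton (pt (N + 2)) (pt (N + 1)) f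
    rw [mem_cocycles_univ.1 hf, Pi.zero_apply, Pi.zero_apply] at hf'
    rw [coboundary_apply_of_subsingleton _ (pt N)]
    rw [Pi.sub_apply, Pi.sub_apply, Pi.smul_apply, Pi.smul_apply, unit, if_neg N.succ_ne_zero,
      smul_zero, sub_zero]
    push_cast at hf'
    linear_combination hf' + CharTwo.add_self_eq_zero (f (N + 1) (pt (N + 1)))

lemma cocycles_le_reducedCoboundaries [ContractibleSpace A] :
    cocycles A ≤ reducedCoboundaries A := fun f hf => by
  rw [← restrict_mem_cocycles_univ] at hf
  rw [← restrict_mem_reducedCoboundaries_univ]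
  obtain ⟨p, hp⟩ := id_nullhomotopic A
  let ι : C(Unit, A) := ContinuousMap.const _ p
  let π : C(A, Unit) := ContinuousMap.const _ ()
  have hp' := pullback_sub_pullback_mem_coboundaries hp hf
  obtain ⟨c, hc⟩ := mem_reducedCoboundaries.1 <|
    cocycles_le_reducedCoboundaries_of_subsingleton ()
      (pullback_mem_cocycles (φ := ι) (Set.mapsTo_univ _ _) hf)
  have hc' := pullback_mem_coboundaries (φ := π) (Set.mapsTo_univ _ Set.univ) hc
  refine mem_reducedCoboundaries.2 ⟨c, ?_⟩
  convert add_mem hp' hc' using 1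
  simp only [map_sub, map_smul, pullback_unit]
  exact (sub_add_sub_cancel _ (pullback (ι.comp π) (restrict A f)) _).symm

end Contractible

section Products

variable {X Y : Type*} [TopologicalSpace X] [TopologicalSpace Y] {A : Set X} {d : ℕ → ℕ}
  {y : ℕ → SingularCochain X}

/-- The cup product `y 0 ⌣ y 1 ⌣ ⋯ ⌣ y (k - 1)` of the first `k` members of a sequence. -/
def cupProd (y : ℕ → SingularCochain X) : ℕ → SingularCochain X
  | 0 => unit
  | k + 1 => cup (cupProd y k) (y k)

lemma cupProd_succ' (y : ℕ → SingularCochain X) (k : ℕ) :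
    cupProd y (k + 1) = cup (y 0) (cupProd (fun i => y (i + 1)) k) := by
  induction k with
  | zero => simp only [cupProd, unit_cup, cup_unit]
  | succ k ih => rw [cupProd, ih, cup_assoc, cupProd]

lemma pullback_cupProd (φ : C(Y, X)) (y : ℕ → SingularCochain X) (k : ℕ) :
    pullback φ (cupProd y k) = cupProd (fun i => pullback φ (y i)) k := by
  induction k with
  | zero => rw [cupProd, cupProd, pullback_unit]
  | succ k ih => rw [cupProd, cupProd, pullback_cup, ih]

lemma cupProd_mem_homogeneous {k : ℕ} (hy : ∀ i < k, y i ∈ homogeneous (d i)) :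
    cupProd y k ∈ homogeneous (∑ i ∈ range k, d i) := by
  induction k with
  | zero => exact unit_mem_homogeneous
  | succ k ih =>
    rw [sum_range_succ]
    exact cup_mem_homogeneous (ih fun i hi => hy i (hi.trans k.lt_succ_self))
      (hy k k.lt_succ_self)

lemma cupProd_mem_cocycles {k : ℕ} (hy : ∀ i < k, y i ∈ cocycles A) : cupProd y k ∈ cocycles A := by
  induction k with
  | zero => exact unit_mem_cocycles
  | succ k ih =>
    exact cup_mem_cocycles (ih fun i hi => hy i (hi.trans k.lt_succ_self)) (hy k k.lt_succ_self)

end Products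

section Acyclic

variable {X : Type*} [TopologicalSpace X] {A B : Set X} {f : SingularCochain X} {j : ℕ}

lemma mem_coboundaries_empty : f ∈ coboundaries (∅ : Set X) :=
  mem_coboundaries_of_restrict_eq_zero <| restrict_eq_zero_iff.2 fun _ _ hσ =>
    (hσ (stdSimplex.vertex 0)).elim

/-- The reduced cohomology of the subspace `A` vanishes in degree `j`. -/
def IsAcyclicAt (j : ℕ) (A : Set X) : Prop :=
  homogeneous j ⊓ cocycles A ≤ reducedCoboundaries A

lemma IsAcyclicAt.mem_coboundaries (hA : IsAcyclicAt (j + 1) A) (jf : f ∈ homogeneous (j + 1))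
    (hf : f ∈ cocycles A) : f ∈ coboundaries A :=
  mem_coboundaries_of_mem_reducedCoboundaries jf (hA ⟨jf, hf⟩)

lemma isAcyclicAt_of_contractibleSpace (hA : A.Nonempty → ContractibleSpace A) :
    IsAcyclicAt j A := by
  rintro f ⟨-, hf⟩
  obtain rfl | hne := A.eq_empty_or_nonempty
  · exact Submodule.mem_sup_left mem_coboundaries_empty
  · have := hA hne
    exact cocycles_le_reducedCoboundaries hf

lemma IsAcyclicAt.union_zero (hA : IsOpen A) (hB : IsOpen B) (aA : IsAcyclicAt 0 A)
    (aB : IsAcyclicAt 0 B) (hne : (A ∩ B).Nonempty) : IsAcyclicAt 0 (A ∪ B) := by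
  rintro f ⟨jf, hf⟩
  obtain ⟨a, ha⟩ := mem_reducedCoboundaries.1 (aA ⟨jf, cocycles_mono Set.subset_union_left hf⟩)
  obtain ⟨b, hb⟩ := mem_reducedCoboundaries.1 (aB ⟨jf, cocycles_mono Set.subset_union_right hf⟩)
  have hom (c : ZMod 2) : f - c • unit ∈ homogeneous 0 :=
    sub_mem jf (Submodule.smul_mem _ c unit_mem_homogeneous)
  have rA := restrict_eq_zero_of_mem_coboundaries (hom a) ha
  have rB := restrict_eq_zero_of_mem_coboundaries (hom b) hb
  obtain rfl : a = b := by
    obtain ⟨p, pA, pB⟩ := hne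
    have eval (c : ZMod 2) (hc : (f - c • unit : SingularCochain X) 0 (.const _ p) = 0) :
        f 0 (.const _ p) = c := by
      simpa [unit, sub_eq_zero] using hc
    rw [← eval a (restrict_eq_zero_iff.1 rA 0 _ fun _ => pA),
      ← eval b (restrict_eq_zero_iff.1 rB 0 _ fun _ => pB)]
  exact mem_reducedCoboundaries.2 ⟨a, mem_coboundaries_union_of_restrict_eq_zero hA hB
    (sub_mem hf (Submodule.smul_mem _ a unit_mem_cocycles)) rA rB⟩

lemma IsAcyclicAt.union_succ (hA : IsOpen A) (hB : IsOpen B) (aA : IsAcyclicAt (j + 1) A)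
    (aB : IsAcyclicAt (j + 1) B) (aAB : IsAcyclicAt j (A ∩ B)) : IsAcyclicAt (j + 1) (A ∪ B) := by
  rintro f ⟨jf, hf⟩
  obtain ⟨z, jz, hz, h⟩ := IsConnecting.exists_of_mem_coboundaries jf
    (aA.mem_coboundaries jf (cocycles_mono Set.subset_union_left hf))
    (aB.mem_coboundaries jf (cocycles_mono Set.subset_union_right hf))
  obtain ⟨c, hc⟩ := mem_reducedCoboundaries.1 (aAB ⟨jz, hz⟩)
  exact Submodule.mem_sup_left <|
    (h.sub_cocycle (Submodule.smul_mem _ c unit_mem_cocycles)).mem_coboundaries hA hB hf hc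

end Acyclic

section RelUnion

variable {X : Type*} {T S : Finset (Set X)}

/-- The part of the union of the family `T` lying in all members of the family `S`. Adding to `T`
one set at a time stays within unions of this form when `S` is allowed to vary. -/
def relUnion (T S : Finset (Set X)) : Set X :=
  ⋃₀ (T : Set (Set X)) ∩ ⋂₀ (S : Set (Set X))

lemma relUnion_empty_left : relUnion ∅ S = ∅ := by
  rw [relUnion, coe_empty, Set.sUnion_empty, Set.empty_inter]

lemma relUnion_empty_right : relUnion T ∅ = ⋃₀ (T : Set (Set X)) := by
  rw [relUnion, coe_empty, Set.sInter_empty, Set.inter_univ]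

lemma relUnion_insert [DecidableEq (Set X)] (a : Set X) (T S : Finset (Set X)) :
    relUnion (insert a T) S = ⋂₀ ((insert a S : Finset (Set X)) : Set (Set X)) ∪ relUnion T S := by
  simp only [relUnion, coe_insert, Set.sUnion_insert, Set.sInter_insert,
    Set.union_inter_distrib_right]

lemma sInter_insert_inter_relUnion [DecidableEq (Set X)] (a : Set X) (T S : Finset (Set X)) :
    ⋂₀ ((insert a S : Finset (Set X)) : Set (Set X)) ∩ relUnion T S = relUnion T (insert a S) := by
  simp only [relUnion, coe_insert, Set.sInter_insert]
  tauto_set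

end RelUnion

section Nerve

variable {X : Type*} [TopologicalSpace X] {U T S : Finset (Set X)} {f : SingularCochain X}
  {j m q : ℕ}

lemma isOpen_sInter_of_isGoodCover (hU : IsGoodCover U) (hS : S ⊆ U) :
    IsOpen (⋂₀ (S : Set (Set X))) :=
  S.finite_toSet.isOpen_sInter fun s hs => hU.1 s (hS hs)

lemma isOpen_sUnion_of_isGoodCover (hU : IsGoodCover U) (hT : T ⊆ U) :
    IsOpen (⋃₀ (T : Set (Set X))) :=
  isOpen_sUnion fun s hs => hU.1 s (hT hs)

lemma isOpen_relUnion (hU : IsGoodCover U) (hT : T ⊆ U) (hS : S ⊆ U) : IsOpen (relUnion T S) :=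
  (isOpen_sUnion_of_isGoodCover hU hT).inter (isOpen_sInter_of_isGoodCover hU hS)

lemma isAcyclicAt_sInter (hU : IsGoodCover U) (hS : S ⊆ U) (hne : S.Nonempty) :
    IsAcyclicAt j (⋂₀ (S : Set (Set X))) :=
  isAcyclicAt_of_contractibleSpace (hU.2.2 S hS hne)

lemma exists_card_of_notMem_coboundaries (hU : IsGoodCover U) (hT : T ⊆ U) (hS : S ⊆ U)
    (jf : f ∈ homogeneous j) (hf : f ∈ cocycles (relUnion T S))
    (hne : f ∉ coboundaries (relUnion T S)) :
    ∃ K ⊆ T, #K = j + 1 ∧ (⋂₀ (K : Set (Set X)) ∩ ⋂₀ (S : Set (Set X))).Nonempty := by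
  classical
  induction T using Finset.induction_on generalizing S j f with
  | empty => exact (hne (relUnion_empty_left (S := S) ▸ mem_coboundaries_empty)).elim
  | insert a T haT ih =>
    have hTU := (Finset.subset_insert a T).trans hT
    have haS := Finset.insert_subset (hT (Finset.mem_insert_self a T)) hS
    cases j with
    | zero =>
      obtain ⟨x, ⟨s, hs, hxs⟩, hxS⟩ : (relUnion (insert a T) S).Nonempty :=
        Set.nonempty_iff_ne_empty.2 fun h => hne (h ▸ mem_coboundaries_empty)
      exact ⟨{s}, by simpa using hs, by simp, x, by simpa using hxs, hxS⟩
    | succ j =>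
      rw [relUnion_insert] at hf hne
      have hfT := cocycles_mono Set.subset_union_right hf
      by_cases hB : f ∈ coboundaries (relUnion T S)
      · have hA := (isAcyclicAt_sInter hU haS (Finset.insert_nonempty a S)).mem_coboundaries jf
          (cocycles_mono Set.subset_union_left hf)
        obtain ⟨z, jz, hz, h⟩ := IsConnecting.exists_of_mem_coboundaries jf hA hB
        have hz' : z ∉ coboundaries (relUnion T (insert a S)) := fun hz' => hne <|
          h.mem_coboundaries (isOpen_sInter_of_isGoodCover hU haS) (isOpen_relUnion hU hTU hS) hf
            (by rwa [sInter_insert_inter_relUnion])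
        rw [sInter_insert_inter_relUnion] at hz
        obtain ⟨K, hK, hcard, x, hxK, hxS⟩ := ih hTU haS jz hz hz'
        rw [coe_insert, Set.sInter_insert] at hxS
        refine ⟨insert a K, Finset.insert_subset_insert a hK, ?_, x, ?_, hxS.2⟩
        · rw [card_insert_of_notMem fun h => haT (hK h), hcard]
        · rw [coe_insert, Set.sInter_insert]
          exact ⟨hxS.1, hxK⟩
      · obtain ⟨K, hK, h⟩ := ih hTU hS jf hfT hB
        exact ⟨K, hK.trans (Finset.subset_insert a T), h⟩

lemma isAcyclicAt_relUnion (hU : IsGoodCover U) (hT : T ⊆ U) (hS : S ⊆ U) (hTn : T.Nonempty)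
    (hne : (⋂₀ (T : Set (Set X)) ∩ ⋂₀ (S : Set (Set X))).Nonempty) :
    IsAcyclicAt j (relUnion T S) := by
  classical
  induction hTn using Finset.Nonempty.cons_induction generalizing S j with
  | singleton a =>
    rw [← LawfulSingleton.insert_empty_eq, relUnion_insert, relUnion_empty_left, Set.union_empty]
    exact isAcyclicAt_sInter hU (Finset.insert_subset (hT (Finset.mem_singleton_self a)) hS)
      (Finset.insert_nonempty a S)
  | cons a T haT hTn ih =>
    rw [cons_eq_insert] at hT hne ⊢
    obtain ⟨x, hxT, hxS⟩ := hne
    rw [coe_insert, Set.sInter_insert] at hxT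
    have hTU := (Finset.subset_insert a T).trans hT
    have haS := Finset.insert_subset (hT (Finset.mem_insert_self a T)) hS
    have hxaS : x ∈ ⋂₀ ((insert a S : Finset (Set X)) : Set (Set X)) := by
      rw [coe_insert, Set.sInter_insert]
      exact ⟨hxT.1, hxS⟩
    have aA {j} := isAcyclicAt_sInter (j := j) hU haS (Finset.insert_nonempty a S)
    have aB {j} := ih (j := j) hTU hS ⟨x, hxT.2, hxS⟩
    have aAB {j} := ih (j := j) hTU haS ⟨x, hxT.2, hxaS⟩
    have oA := isOpen_sInter_of_isGoodCover hU haS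
    have oB := isOpen_relUnion hU hTU hS
    rw [relUnion_insert]
    cases j with
    | zero =>
      obtain ⟨s, hs⟩ := hTn
      exact aA.union_zero oA oB aB ⟨x, hxaS, ⟨s, hs, hxT.2 s hs⟩, hxS⟩
    | succ j => exact aA.union_succ oA oB aB (sInter_insert_inter_relUnion a T S ▸ aAB)

-- The nerve of `m + 2` sets with cohomology in degree `m` is the boundary of a simplex.
lemma isAcyclicAt_relUnion_of_card_eq (hU : IsGoodCover U) (hT : T ⊆ U) (hS : S ⊆ U)
    (hcard : #T = m + 2) (hm : ¬ IsAcyclicAt m (relUnion T S)) (hq : q < m) :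
    IsAcyclicAt q (relUnion T S) := by
  classical
  induction m generalizing T S q with
  | zero => exact (Nat.not_lt_zero q hq).elim
  | succ m ih =>
    obtain ⟨f, ⟨jf, hf⟩, hne⟩ := SetLike.not_le_iff_exists.1 hm
    obtain ⟨K, hK, hKcard, hKne⟩ := exists_card_of_notMem_coboundaries hU hT hS jf hf
      fun h => hne (Submodule.mem_sup_left h)
    obtain ⟨a, -, rfl⟩ : ∃ a ∉ K, insert a K = T :=
      exists_eq_insert_iff.2 ⟨hK, by rw [hKcard, hcard]⟩
    have hKU := (Finset.subset_insert a K).trans hT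
    have haS := Finset.insert_subset (hT (Finset.mem_insert_self a K)) hS
    have aA {j} := isAcyclicAt_sInter (j := j) hU haS (Finset.insert_nonempty a S)
    have aB {j} := isAcyclicAt_relUnion (j := j) hU hKU hS (card_pos.1 (by lia)) hKne
    have oA := isOpen_sInter_of_isGoodCover hU haS
    have oB := isOpen_relUnion hU hKU hS
    have hAB : ¬ IsAcyclicAt m (relUnion K (insert a S)) := fun h =>
      hm (relUnion_insert a K S ▸ aA.union_succ oA oB aB (sInter_insert_inter_relUnion a K S ▸ h))
    rw [relUnion_insert]
    cases q with
    | zero =>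
      refine aA.union_zero oA oB aB (Set.nonempty_iff_ne_empty.2 fun h => hAB ?_)
      rw [← sInter_insert_inter_relUnion, h]
      exact fun f _ => Submodule.mem_sup_left mem_coboundaries_empty
    | succ q =>
      exact aA.union_succ oA oB aB (sInter_insert_inter_relUnion a K S ▸
        ih hKU haS hKcard hAB (Nat.lt_of_succ_lt_succ hq))

end Nerve

section CardBound

variable {X : Type*} [TopologicalSpace X] {U T : Finset (Set X)} {f g : SingularCochain X}
  {d : ℕ → ℕ} {y : ℕ → SingularCochain X} {k p q : ℕ}

lemma exists_card_forall_mem_coboundaries (hU : IsGoodCover U) (hT : T ⊆ U)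
    (jf : f ∈ homogeneous p) (hf : f ∈ cocycles Set.univ)
    (hne : f ∉ coboundaries (⋃₀ (T : Set (Set X)))) :
    ∃ S ⊆ T, #S = p + 1 ∧ ∀ {q}, q ≠ 0 → ∀ g ∈ homogeneous q, g ∈ cocycles Set.univ →
      g ∈ coboundaries (⋃₀ (S : Set (Set X))) := by
  rw [← relUnion_empty_right] at hne
  obtain ⟨S, hST, hcard, hS⟩ := exists_card_of_notMem_coboundaries hU hT (Finset.empty_subset _) jf
    (cocycles_mono (Set.subset_univ _) hf) hne
  refine ⟨S, hST, hcard, fun {q} hq g jg hg => ?_⟩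
  obtain ⟨q, rfl⟩ := Nat.exists_eq_succ_of_ne_zero hq
  rw [← relUnion_empty_right]
  exact (isAcyclicAt_relUnion hU (hST.trans hT) (Finset.empty_subset _) (card_pos.1 (by lia))
    hS).mem_coboundaries jg (cocycles_mono (Set.subset_univ _) hg)

lemma exists_card_of_cup_notMem_coboundaries (hU : IsGoodCover U) (hT : T ⊆ U)
    (jf : f ∈ homogeneous p) (jg : g ∈ homogeneous q) (hq : q ≠ 0) (hf : f ∈ cocycles Set.univ)
    (hg : g ∈ cocycles Set.univ) (hne : cup f g ∉ coboundaries (⋃₀ (T : Set (Set X)))) :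
    ∃ S ⊆ T, #S + (p + q + 1) = #T ∧ f ∉ coboundaries (⋃₀ (S : Set (Set X))) ∧
      (p ≠ 0 → g ∉ coboundaries (⋃₀ (S : Set (Set X)))) := by
  classical
  obtain ⟨K, hKT, hcard, hK⟩ := exists_card_forall_mem_coboundaries hU hT
    (cup_mem_homogeneous jf jg) (cup_mem_cocycles hf hg) hne
  have oS := isOpen_sUnion_of_isGoodCover hU ((sdiff_subset (t := K)).trans hT)
  have oK := isOpen_sUnion_of_isGoodCover hU (hKT.trans hT)
  have hTK : ⋃₀ (T : Set (Set X)) =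
      ⋃₀ ((T \ K : Finset (Set X)) : Set (Set X)) ∪ ⋃₀ (K : Set (Set X)) := by
    rw [← Set.sUnion_union, ← coe_union, Finset.sdiff_union_of_subset hKT]
  refine ⟨T \ K, sdiff_subset, ?_, fun hfS => hne ?_, fun hp hgS => hne ?_⟩
  · rw [← hcard, card_sdiff_add_card_eq_card hKT]
  · rw [hTK]
    exact cup_mem_coboundaries_union oS oK (cocycles_mono (Set.subset_univ _) hf)
      (cocycles_mono (Set.subset_univ _) hg) hfS (hK hq g jg hg)
  · rw [hTK, Set.union_comm]
    exact cup_mem_coboundaries_union oK oS (cocycles_mono (Set.subset_univ _) hf)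
      (cocycles_mono (Set.subset_univ _) hg) (hK hp f jf hf) hgS

lemma exists_card_of_cupProd_notMem_coboundaries (hU : IsGoodCover U) (hT : T ⊆ U)
    (hd : ∀ i, d i ≠ 0) (jy : ∀ i < k + 1, y i ∈ homogeneous (d i))
    (hy : ∀ i < k + 1, y i ∈ cocycles Set.univ)
    (hne : cupProd y (k + 1) ∉ coboundaries (⋃₀ (T : Set (Set X)))) :
    ∃ S ⊆ T, #S + (∑ i ∈ range (k + 1), d i + 1) = #T ∧
      cupProd y k ∉ coboundaries (⋃₀ (S : Set (Set X))) ∧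
      (k ≠ 0 → y k ∉ coboundaries (⋃₀ (S : Set (Set X)))) := by
  have hk i (hi : i < k) : i < k + 1 := hi.trans k.lt_succ_self
  obtain ⟨S, hST, hcard, hS, hS'⟩ := exists_card_of_cup_notMem_coboundaries hU hT
    (cupProd_mem_homogeneous fun i hi => jy i (hk i hi)) (jy k k.lt_succ_self) (hd k)
    (cupProd_mem_cocycles fun i hi => hy i (hk i hi)) (hy k k.lt_succ_self) hne
  refine ⟨S, hST, sum_range_succ d k ▸ hcard, hS, fun hk => hS' fun h0 => hd 0 ?_⟩
  exact sum_eq_zero_iff.1 h0 0 (Finset.mem_range.2 (Nat.pos_of_ne_zero hk))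

lemma add_two_le_card (hU : IsGoodCover U) (hT : T ⊆ U) (hd : ∀ i, d i ≠ 0)
    (jy : ∀ i < 1, y i ∈ homogeneous (d i)) (hy : ∀ i < 1, y i ∈ cocycles Set.univ)
    (hne : cupProd y 1 ∉ coboundaries (⋃₀ (T : Set (Set X)))) : d 0 + 2 ≤ #T := by
  obtain ⟨S, -, hcard, hS, -⟩ := exists_card_of_cupProd_notMem_coboundaries hU hT hd jy hy hne
  obtain rfl | hSne := S.eq_empty_or_nonempty
  · rw [coe_empty, Set.sUnion_empty] at hS
    exact (hS mem_coboundaries_empty).elim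
  · have := hSne.card_pos
    rw [zero_add, sum_range_one] at hcard
    lia

-- The extra unit comes from the degree `d 1 < d 0`, in which the boundary of a simplex of
-- dimension `d 0 + 1` has no cohomology.
lemma add_four_le_card (hU : IsGoodCover U) (hT : T ⊆ U) (hd : ∀ i, d i ≠ 0) (hd' : d 1 < d 0)
    (jy : ∀ i < 2, y i ∈ homogeneous (d i)) (hy : ∀ i < 2, y i ∈ cocycles Set.univ)
    (hne : cupProd y 2 ∉ coboundaries (⋃₀ (T : Set (Set X)))) : 2 * d 0 + d 1 + 4 ≤ #T := by
  obtain ⟨S, hST, hcard, hS, hS'⟩ := exists_card_of_cupProd_notMem_coboundaries hU hT hd jy hy hne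
  have hSU := hST.trans hT
  have hy1 := hS' one_ne_zero
  have hle := add_two_le_card hU hSU hd (fun i hi => jy i (by lia)) (fun i hi => hy i (by lia)) hS
  have hne : #S ≠ d 0 + 2 := fun hSc => by
    rw [cupProd, cupProd, unit_cup] at hS
    rw [← relUnion_empty_right] at hS hy1
    obtain ⟨p, hp⟩ := Nat.exists_eq_succ_of_ne_zero (hd 0)
    obtain ⟨q, hq⟩ := Nat.exists_eq_succ_of_ne_zero (hd 1)
    have jy0 := jy 0 (by lia)
    have jy1 := jy 1 (by lia)
    rw [hp] at jy0
    rw [hq] at jy1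
    have h0 : ¬ IsAcyclicAt (p + 1) (relUnion S ∅) := fun h =>
      hS (h.mem_coboundaries jy0 (cocycles_mono (Set.subset_univ _) (hy 0 (by lia))))
    exact hy1 <| (isAcyclicAt_relUnion_of_card_eq hU hSU (Finset.empty_subset _) (by lia) h0
      (by lia)).mem_coboundaries jy1 (cocycles_mono (Set.subset_univ _) (hy 1 (by lia)))
  rw [sum_range_succ, sum_range_one] at hcard
  lia

theorem add_sum_sum_le_card (hU : IsGoodCover U) (hT : T ⊆ U) (hd : ∀ i, d i ≠ 0)
    (hd' : d 1 < d 0) (jy : ∀ i < k + 2, y i ∈ homogeneous (d i))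
    (hy : ∀ i < k + 2, y i ∈ cocycles Set.univ)
    (hne : cupProd y (k + 2) ∉ coboundaries (⋃₀ (T : Set (Set X)))) :
    k + 4 + ∑ j ∈ range (k + 2), ∑ i ∈ range (j + 1), d i ≤ #T := by
  induction k generalizing T with
  | zero =>
    have := add_four_le_card hU hT hd hd' jy hy hne
    simp only [zero_add, sum_range_succ, sum_range_zero]
    lia
  | succ k ih =>
    obtain ⟨S, hST, hcard, hS, -⟩ := exists_card_of_cupProd_notMem_coboundaries hU hT hd jy hy hne
    have := ih (hST.trans hT) (fun i hi => jy i (by lia)) (fun i hi => hy i (by lia)) hS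
    rw [sum_range_succ _ (k + 2)]
    lia

end CardBound

section DegreeSum

lemma sum_range_odd_degrees {j K : ℕ} (hj : j ≤ K) :
    ∑ i ∈ range j, (2 * (K - i) + 1) + j ^ 2 = j * (2 * K + 2) := by
  induction j with
  | zero => simp
  | succ j ih =>
    obtain ⟨r, rfl⟩ := Nat.exists_eq_add_of_lt hj
    have := ih (by lia)
    rw [sum_range_succ, show j + r + 1 - j = r + 1 by lia]
    linarith

lemma six_mul_sum_sum_range_odd_degrees {j K : ℕ} (hj : j ≤ K) :
    6 * ∑ l ∈ range j, ∑ i ∈ range (l + 1), (2 * (K - i) + 1) + j * (j + 1) * (2 * j + 1) =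
      6 * (K + 1) * j * (j + 1) := by
  induction j with
  | zero => simp
  | succ j ih =>
    rw [sum_range_succ]
    linarith [ih (by lia), sum_range_odd_degrees hj]

end DegreeSum

section RestrictionIso

variable {X : Type*} [TopologicalSpace X] {A F : Set X} {f Θ : SingularCochain X} {d j : ℕ}

/-- `F` is a subspace of `A` and the restriction from `A` to `F` is an isomorphism in mod 2 singular
cohomology. Surjectivity is stated as the extension of cocycles, since coboundaries always
extend. -/
structure IsRestrictionIso (F A : Set X) : Prop where
  subset : F ⊆ A
  mem_coboundaries : ∀ f ∈ cocycles A, f ∈ coboundaries F → f ∈ coboundaries A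
  exists_restrict_eq : ∀ f ∈ cocycles F, ∃ g ∈ cocycles A, restrict F g = restrict F f

lemma IsRestrictionIso.exists_homogeneous (h : IsRestrictionIso F A) (jf : f ∈ homogeneous j)
    (hf : f ∈ cocycles F) :
    ∃ g ∈ homogeneous j, g ∈ cocycles A ∧ restrict F g = restrict F f := by
  obtain ⟨g, hg, hgf⟩ := h.exists_restrict_eq f hf
  refine ⟨component j g, component_mem_homogeneous j g, component_mem_cocycles hg, ?_⟩
  rw [restrict_component, hgf, ← restrict_component, component_eq_self jf]

lemma IsRestrictionIso.of_homotopic (hFA : F ⊆ A) {ρ : C(A, A)}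
    (hρ : (ContinuousMap.id A).Homotopic ρ) (hF : ∀ a, (ρ a : X) ∈ F)
    (hfix : ∀ a : A, (a : X) ∈ F → ρ a = a) : IsRestrictionIso F A := by
  let ι : C(A, X) := ⟨Subtype.val, continuous_subtype_val⟩
  have hιρ : Set.MapsTo (ι.comp ρ) Set.univ F := fun a _ => hF a
  refine ⟨hFA, fun f hf hfF => ?_, fun f hf => ?_⟩
  · rw [← restrict_mem_coboundaries_univ]
    have := pullback_sub_pullback_mem_coboundaries hρ (restrict_mem_cocycles_univ.2 hf)
    exact (Submodule.sub_mem_iff_left _ (pullback_mem_coboundaries hιρ hfF)).1 this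
  · obtain ⟨g, hg⟩ := restrict_surjective A (pullback (ι.comp ρ) f)
    refine ⟨g, ?_, restrict_eq_iff.2 fun N σ hσ => ?_⟩
    · rw [← restrict_mem_cocycles_univ, hg]
      exact pullback_mem_cocycles hιρ hf
    · let τ : C(GeomSimplex N, A) := ⟨fun x => ⟨σ x, hFA (hσ x)⟩, by fun_prop⟩
      calc g N σ = f N ((ι.comp ρ).comp τ) := congrFun (congrFun hg N) τ
        _ = f N σ := congrArg (f N) <|
          ContinuousMap.ext fun x => congrArg Subtype.val (hfix (τ x) (hσ x))

/-- `Θ` is a cocycle on `A` whose class generates `H^d(A; 𝔽₂) ≅ 𝔽₂`, and the cohomology of `A`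
vanishes in degrees above `d`. -/
structure IsTopClass (A : Set X) (d : ℕ) (Θ : SingularCochain X) : Prop where
  mem_homogeneous : Θ ∈ homogeneous d
  mem_cocycles : Θ ∈ cocycles A
  notMem_coboundaries : Θ ∉ coboundaries A
  mem_coboundaries : ∀ j > d, ∀ f ∈ homogeneous j, f ∈ cocycles A → f ∈ coboundaries A
  exists_sub_smul : ∀ f ∈ homogeneous d, f ∈ cocycles A → ∃ c : ZMod 2, f - c • Θ ∈ coboundaries A

lemma IsTopClass.extend (h : IsTopClass F d Θ) (hFA : IsRestrictionIso F A)
    (hΘ : Θ ∈ cocycles A) : IsTopClass A d Θ where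
  mem_homogeneous := h.mem_homogeneous
  mem_cocycles := hΘ
  notMem_coboundaries hA := h.notMem_coboundaries (coboundaries_mono hFA.subset hA)
  mem_coboundaries j hj f jf hf :=
    hFA.mem_coboundaries f hf (h.mem_coboundaries j hj f jf (cocycles_mono hFA.subset hf))
  exists_sub_smul f jf hf := by
    obtain ⟨c, hc⟩ := h.exists_sub_smul f jf (cocycles_mono hFA.subset hf)
    exact ⟨c, hFA.mem_coboundaries _ (sub_mem hf (Submodule.smul_mem _ c hΘ)) hc⟩

lemma IsTopClass.restrict (h : IsTopClass A d Θ) (hFA : IsRestrictionIso F A) :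
    IsTopClass F d Θ where
  mem_homogeneous := h.mem_homogeneous
  mem_cocycles := cocycles_mono hFA.subset h.mem_cocycles
  notMem_coboundaries hF := h.notMem_coboundaries (hFA.mem_coboundaries Θ h.mem_cocycles hF)
  mem_coboundaries j hj f jf hf := by
    obtain ⟨g, jg, hg, hgf⟩ := hFA.exists_homogeneous jf hf
    exact (mem_coboundaries_congr hgf).1
      (coboundaries_mono hFA.subset (h.mem_coboundaries j hj g jg hg))
  exists_sub_smul f jf hf := by
    obtain ⟨g, jg, hg, hgf⟩ := hFA.exists_homogeneous jf hf
    obtain ⟨c, hc⟩ := h.exists_sub_smul g jg hg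
    refine ⟨c, (mem_coboundaries_congr ?_).1 (coboundaries_mono hFA.subset hc)⟩
    rw [map_sub, hgf, ← map_sub]

lemma IsTopClass.congr {Θ' : SingularCochain X} (h : IsTopClass A d Θ)
    (hΘ' : Θ' ∈ homogeneous d) (hΘ : SingularCochain.restrict A Θ' = SingularCochain.restrict A Θ) :
    IsTopClass A d Θ' where
  mem_homogeneous := hΘ'
  mem_cocycles := (mem_cocycles_congr hΘ).2 h.mem_cocycles
  notMem_coboundaries hA := h.notMem_coboundaries ((mem_coboundaries_congr hΘ).1 hA)
  mem_coboundaries := h.mem_coboundaries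
  exists_sub_smul f jf hf := by
    obtain ⟨c, hc⟩ := h.exists_sub_smul f jf hf
    refine ⟨c, (mem_coboundaries_congr ?_).1 hc⟩
    rw [map_sub, map_sub, map_smul, map_smul, hΘ]

lemma isTopClass_univ_unit [Subsingleton X] [Nonempty X] :
    IsTopClass (Set.univ : Set X) 0 unit where
  mem_homogeneous := unit_mem_homogeneous
  mem_cocycles := unit_mem_cocycles
  notMem_coboundaries h := by
    obtain ⟨p⟩ := ‹Nonempty X›
    have := restrict_eq_zero_iff.1 (restrict_eq_zero_of_mem_coboundaries unit_mem_homogeneous h) 0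
      (ContinuousMap.const _ p) fun _ => Set.mem_univ _
    simp [unit] at this
  mem_coboundaries j hj f jf hf := by
    obtain ⟨p⟩ := ‹Nonempty X›
    obtain ⟨j, rfl⟩ := Nat.exists_eq_add_one.2 hj
    exact mem_coboundaries_of_mem_reducedCoboundaries jf
      (cocycles_le_reducedCoboundaries_of_subsingleton p hf)
  exists_sub_smul f _ hf := by
    obtain ⟨p⟩ := ‹Nonempty X›
    exact mem_reducedCoboundaries.1 (cocycles_le_reducedCoboundaries_of_subsingleton p hf)

end RestrictionIso

section TopClassUnion

variable {X : Type*} [TopologicalSpace X] {A B C C' : Set X} {f z w Θ : SingularCochain X} {d j : ℕ}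

lemma mem_coboundaries_union_of_disjoint (hA : IsOpen A) (hB : IsOpen B) (hAB : A ∩ B = ∅)
    (jf : f ∈ homogeneous j) (hf : f ∈ cocycles (A ∪ B)) (fA : f ∈ coboundaries A)
    (fB : f ∈ coboundaries B) : f ∈ coboundaries (A ∪ B) := by
  cases j with
  | zero =>
    exact mem_coboundaries_union_of_restrict_eq_zero hA hB hf
      (restrict_eq_zero_of_mem_coboundaries jf fA) (restrict_eq_zero_of_mem_coboundaries jf fB)
  | succ j =>
    obtain ⟨z, -, -, h⟩ := IsConnecting.exists_of_mem_coboundaries jf fA fB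
    exact h.mem_coboundaries hA hB hf (hAB ▸ mem_coboundaries_empty)

lemma IsConnecting.isTopClass_union (h : IsConnecting A B z w) (hA : IsOpen A) (hB : IsOpen B)
    (jw : w ∈ homogeneous (d + 1)) (hw : w ∈ cocycles (A ∪ B)) (hz : IsTopClass (A ∩ B) d z)
    (vA : ∀ j ≥ d, ∀ f ∈ homogeneous j, f ∈ cocycles A → f ∈ coboundaries A)
    (vB : ∀ j ≥ d, ∀ f ∈ homogeneous j, f ∈ cocycles B → f ∈ coboundaries B) :
    IsTopClass (A ∪ B) (d + 1) w := by
  have exists_connecting {j} (hj : d ≤ j) {f} (jf : f ∈ homogeneous (j + 1))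
      (hf : f ∈ cocycles (A ∪ B)) :
      ∃ y ∈ homogeneous j, y ∈ cocycles (A ∩ B) ∧ IsConnecting A B y f :=
    IsConnecting.exists_of_mem_coboundaries jf
      (vA _ (by lia) f jf (cocycles_mono Set.subset_union_left hf))
      (vB _ (by lia) f jf (cocycles_mono Set.subset_union_right hf))
  refine ⟨jw, hw, fun hwAB => hz.notMem_coboundaries ?_, fun j hj f jf hf => ?_, fun f jf hf => ?_⟩
  · obtain ⟨a, ja, b, jb, ca, cb, hab⟩ := h.exists_eq_sub hz.mem_homogeneous hwAB
    rw [← mem_coboundaries_congr hab]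
    exact sub_mem (coboundaries_mono Set.inter_subset_left (vA d le_rfl a ja ca))
      (coboundaries_mono Set.inter_subset_right (vB d le_rfl b jb cb))
  · obtain ⟨j, rfl⟩ := Nat.exists_eq_add_one.2 (Nat.zero_lt_of_lt hj)
    obtain ⟨y, jy, hy, hyf⟩ := exists_connecting (by lia) jf hf
    exact hyf.mem_coboundaries hA hB hf (hz.mem_coboundaries j (by lia) y jy hy)
  · obtain ⟨y, jy, hy, hyf⟩ := exists_connecting le_rfl jf hf
    obtain ⟨c, hc⟩ := hz.exists_sub_smul y jy hy
    exact ⟨c, (hyf.sub_smul h c).mem_coboundaries hA hB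
      (sub_mem hf (Submodule.smul_mem _ c hw)) hc⟩

section Suspension

variable (hA : IsTopClass A d Θ) (hB : IsTopClass B d Θ) (hC : IsTopClass C d Θ)
  (hC' : IsTopClass C' d Θ) (hAB : A ∩ B = C ∪ C')
  (zC : restrict C z = restrict C Θ) (zC' : restrict C' z = 0)
include hA hB hC hC' hAB zC zC'

lemma IsConnecting.notMem_coboundaries_union (h : IsConnecting A B z w) (jz : z ∈ homogeneous d) :
    w ∉ coboundaries (A ∪ B) := fun hw => by
  obtain ⟨a, ja, b, jb, ca, cb, hab⟩ := h.exists_eq_sub jz hw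
  obtain ⟨α, hα⟩ := hA.exists_sub_smul a ja ca
  obtain ⟨β, hβ⟩ := hB.exists_sub_smul b jb cb
  have hC_AB : C ⊆ A ∩ B := hAB ▸ Set.subset_union_left
  have hC'_AB : C' ⊆ A ∩ B := hAB ▸ Set.subset_union_right
  have key : z - (α - β) • Θ ∈ coboundaries (A ∩ B) := by
    have hs : (a - b) - (α - β) • Θ ∈ coboundaries (A ∩ B) := by
      rw [_root_.sub_smul, sub_sub_sub_comm]
      exact sub_mem (coboundaries_mono Set.inter_subset_left hα)
        (coboundaries_mono Set.inter_subset_right hβ)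
    refine (mem_coboundaries_congr ?_).1 hs
    rw [map_sub, hab, ← map_sub]
  have zero_or_one : ∀ c : ZMod 2, c = 0 ∨ c = 1 := by decide
  rcases zero_or_one (α - β) with hc | hc <;> rw [hc] at key
  · refine hC.notMem_coboundaries ((mem_coboundaries_congr zC).1 ?_)
    simpa only [zero_smul, sub_zero] using coboundaries_mono hC_AB key
  · refine hC'.notMem_coboundaries (neg_mem_iff.1 ?_)
    refine (mem_coboundaries_congr ?_).1 (coboundaries_mono hC'_AB key)
    rw [map_sub, zC', one_smul, zero_sub, map_neg]

lemma IsConnecting.isTopClass_union_of_disjoint (h : IsConnecting A B z w) (oA : IsOpen A)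
    (oB : IsOpen B) (oC : IsOpen C) (oC' : IsOpen C') (hCC' : C ∩ C' = ∅)
    (jz : z ∈ homogeneous d) (cz : z ∈ cocycles (A ∩ B))
    (jw : w ∈ homogeneous (d + 1)) (hw : w ∈ cocycles (A ∪ B)) :
    IsTopClass (A ∪ B) (d + 1) w := by
  have exists_connecting {j} (hj : d ≤ j) {f} (jf : f ∈ homogeneous (j + 1))
      (hf : f ∈ cocycles (A ∪ B)) :
      ∃ y ∈ homogeneous j, y ∈ cocycles (A ∩ B) ∧ IsConnecting A B y f :=
    IsConnecting.exists_of_mem_coboundaries jf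
      (hA.mem_coboundaries _ (by lia) f jf (cocycles_mono Set.subset_union_left hf))
      (hB.mem_coboundaries _ (by lia) f jf (cocycles_mono Set.subset_union_right hf))
  have mem_inter {j f} (jf : f ∈ homogeneous j) (hf : f ∈ cocycles (A ∩ B))
      (fC : f ∈ coboundaries C) (fC' : f ∈ coboundaries C') : f ∈ coboundaries (A ∩ B) := by
    rw [hAB] at hf ⊢
    exact mem_coboundaries_union_of_disjoint oC oC' hCC' jf hf fC fC'
  have hC_AB : C ⊆ A ∩ B := hAB ▸ Set.subset_union_left
  have hC'_AB : C' ⊆ A ∩ B := hAB ▸ Set.subset_union_right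
  refine ⟨jw, hw, h.notMem_coboundaries_union hA hB hC hC' hAB zC zC' jz,
    fun j hj f jf hf => ?_, fun f jf hf => ?_⟩
  · obtain ⟨j, rfl⟩ := Nat.exists_eq_add_one.2 (Nat.zero_lt_of_lt hj)
    obtain ⟨y, jy, hy, hyf⟩ := exists_connecting (by lia) jf hf
    exact hyf.mem_coboundaries oA oB hf <| mem_inter jy hy
      (hC.mem_coboundaries j (by lia) y jy (cocycles_mono hC_AB hy))
      (hC'.mem_coboundaries j (by lia) y jy (cocycles_mono hC'_AB hy))
  · obtain ⟨y, jy, hy, hyf⟩ := exists_connecting le_rfl jf hf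
    obtain ⟨c', hc'⟩ := hC'.exists_sub_smul y jy (cocycles_mono hC'_AB hy)
    have cΘ : c' • Θ ∈ cocycles (A ∩ B) :=
      Submodule.smul_mem _ c' (cocycles_mono Set.inter_subset_left hA.mem_cocycles)
    have jy' : y - c' • Θ ∈ homogeneous d :=
      sub_mem jy (Submodule.smul_mem _ c' hA.mem_homogeneous)
    obtain ⟨c, hc⟩ := hC.exists_sub_smul _ jy' (cocycles_mono hC_AB (sub_mem hy cΘ))
    have hy' := (hyf.sub_cocycle (Submodule.smul_mem _ c' hA.mem_cocycles)).sub_smul h c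
    refine ⟨c, hy'.mem_coboundaries oA oB (sub_mem hf (Submodule.smul_mem _ c hw)) <|
      mem_inter (sub_mem jy' (Submodule.smul_mem _ c jz))
        (sub_mem (sub_mem hy cΘ) (Submodule.smul_mem _ c cz)) ?_ ?_⟩
    · refine (mem_coboundaries_congr ?_).1 hc
      simp only [map_sub, map_smul, zC]
    · refine (mem_coboundaries_congr ?_).1 hc'
      simp only [map_sub, map_smul, zC', smul_zero, sub_zero]

end Suspension

end TopClassUnion

section SphereFibration

variable {X : Type*} {c : ℕ → X → ℝ} {m : ℕ}

/-- The points where one of the first `m` coordinates does not vanish, i.e. the part of a sphere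
bundle lying over the complement of a linear subspace of codimension `m`. -/
def someCoordNeZero (c : ℕ → X → ℝ) (m : ℕ) : Set X := {x | ∃ i < m, c i x ≠ 0}

/-- The points where one of the first `m` coordinates does not vanish, or the next one has the sign
of `s`: a sphere minus a closed hemisphere of a great subsphere. -/
def cap (c : ℕ → X → ℝ) (s : ℝ) (m : ℕ) : Set X := someCoordNeZero c m ∪ {x | 0 < s * c m x}

lemma someCoordNeZero_zero : someCoordNeZero c 0 = ∅ := by
  simp [someCoordNeZero]

lemma cap_union_cap (c : ℕ → X → ℝ) (m : ℕ) :
    cap c 1 m ∪ cap c (-1) m = someCoordNeZero c (m + 1) := by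
  ext x
  simp only [cap, someCoordNeZero, Set.mem_union, Set.mem_ofPred_eq, one_mul, neg_one_mul,
    Left.neg_pos_iff, Nat.lt_succ_iff_lt_or_eq, or_and_right, exists_or, exists_eq_left,
    ne_iff_lt_or_gt (a := c m x)]
  rw [or_or_or_comm, or_self, or_comm (a := 0 < c m x)]

lemma cap_inter_cap (c : ℕ → X → ℝ) (m : ℕ) :
    cap c 1 m ∩ cap c (-1) m = someCoordNeZero c m := by
  rw [cap, cap, ← Set.union_inter_distrib_left, Set.union_eq_left]
  rintro x ⟨h, h'⟩
  simp only [Set.mem_ofPred_eq] at h h'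
  linarith

variable [TopologicalSpace X] {F F' : Set X} {M d j : ℕ} {f Θ : SingularCochain X}

/-- Coordinates `c 0, …, c M` on `X` which behave like those of a map to the sphere `S^M` that is a
fibration with fibres `F` over `(1, 0, …, 0)` and `F'` over `(-1, 0, …, 0)`: the inclusions of the
fibres into the preimages of the contractible sets `cap` are cohomology isomorphisms. -/
structure IsSphereFibration (M : ℕ) (c : ℕ → X → ℝ) (F F' : Set X) : Prop where
  continuous : ∀ i, Continuous (c i)
  exists_ne_zero : ∀ x, ∃ i ≤ M, c i x ≠ 0
  isRestrictionIso_one : ∀ m ≤ M, IsRestrictionIso F (cap c 1 m)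
  isRestrictionIso_neg_one : ∀ m ≤ M, 0 < m → IsRestrictionIso F (cap c (-1) m)
  isRestrictionIso_one_one : IsRestrictionIso F' (cap c 1 1)
  isRestrictionIso_neg_one_zero : IsRestrictionIso F' (cap c (-1) 0)

namespace IsSphereFibration

lemma isOpen_cap (h : IsSphereFibration M c F F') (s : ℝ) (m : ℕ) : IsOpen (cap c s m) := by
  have : cap c s m = (⋃ i < m, {x | c i x ≠ 0}) ∪ {x | 0 < s * c m x} := by
    ext x
    simp [cap, someCoordNeZero]
  rw [this]
  exact (isOpen_biUnion fun i _ => isOpen_ne_fun (h.continuous i) continuous_const).union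
    (isOpen_lt continuous_const (continuous_const.mul (h.continuous m)))

lemma someCoordNeZero_eq_univ (h : IsSphereFibration M c F F') :
    someCoordNeZero c (M + 1) = Set.univ :=
  Set.eq_univ_of_forall fun x => by
    obtain ⟨i, hi, hx⟩ := h.exists_ne_zero x
    exact ⟨i, by lia, hx⟩

lemma exists_isConnecting_isTopClass (h : IsSphereFibration M c F F') (hM : 1 ≤ M)
    (hΘ : Θ ∈ cocycles Set.univ) (hF : IsTopClass F d Θ) :
    ∃ s ∈ homogeneous 1, s ∈ cocycles (someCoordNeZero c 2) ∧
      IsTopClass (someCoordNeZero c 2) (d + 1) (cup s Θ) := by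
  have hΘ' A : Θ ∈ cocycles A := cocycles_mono (Set.subset_univ A) hΘ
  have hA : IsTopClass (cap c 1 1) d Θ := hF.extend (h.isRestrictionIso_one 1 hM) (hΘ' _)
  have hB : IsTopClass (cap c (-1) 1) d Θ :=
    hF.extend (h.isRestrictionIso_neg_one 1 hM one_pos) (hΘ' _)
  have hC : IsTopClass (cap c 1 0) d Θ := hF.extend (h.isRestrictionIso_one 0 M.zero_le) (hΘ' _)
  have hC' : IsTopClass (cap c (-1) 0) d Θ :=
    (hA.restrict h.isRestrictionIso_one_one).extend h.isRestrictionIso_neg_one_zero (hΘ' _)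
  have hCC' : cap c 1 0 ∩ cap c (-1) 0 = ∅ := by rw [cap_inter_cap, someCoordNeZero_zero]
  have hAB : cap c 1 1 ∩ cap c (-1) 1 = cap c 1 0 ∪ cap c (-1) 0 := by
    rw [cap_inter_cap, cap_union_cap]
  obtain ⟨z, jz, cz, zC, zC'⟩ := exists_homogeneous_cocycle_restrict_eq (h.isOpen_cap 1 0)
    (h.isOpen_cap (-1) 0) unit_mem_homogeneous (zero_mem (homogeneous 0)) unit_mem_cocycles
    (zero_mem _) (by
      rw [hCC']
      exact restrict_eq_iff.2 fun _ _ hσ => (hσ (stdSimplex.vertex 0)).elim)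
  rw [← hAB] at cz
  obtain ⟨s, js, cs, hs⟩ :=
    IsConnecting.exists_of_cocycle (h.isOpen_cap 1 1) (h.isOpen_cap (-1) 1) jz cz
  rw [← cap_union_cap]
  have jzΘ := cup_mem_homogeneous jz hF.mem_homogeneous
  have jsΘ := cup_mem_homogeneous js hF.mem_homogeneous
  rw [zero_add] at jzΘ
  rw [zero_add, add_comm] at jsΘ
  refine ⟨s, by simpa only [zero_add] using js, cs,
    (hs.cup (hΘ' _) (hΘ' _)).isTopClass_union_of_disjoint hA hB hC hC' hAB ?_ ?_
    (h.isOpen_cap _ _) (h.isOpen_cap _ _) (h.isOpen_cap _ _) (h.isOpen_cap _ _) hCC' jzΘ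
    (cup_mem_cocycles cz (hΘ' _)) jsΘ (cup_mem_cocycles cs (hΘ' _))⟩
  · rw [restrict_cup, zC, ← restrict_cup, unit_cup]
  · rw [restrict_cup, zC', ← restrict_cup, map_zero, LinearMap.zero_apply, map_zero]

lemma exists_isTopClass_cup (h : IsSphereFibration M c F F') (hm : m + 1 ≤ M)
    (hΘ : Θ ∈ cocycles Set.univ) (hF : IsTopClass F d Θ) :
    ∃ s ∈ homogeneous (m + 1), s ∈ cocycles (someCoordNeZero c (m + 2)) ∧
      IsTopClass (someCoordNeZero c (m + 2)) (d + (m + 1)) (cup s Θ) := by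
  induction m with
  | zero => exact h.exists_isConnecting_isTopClass hm hΘ hF
  | succ m ih =>
    have hΘ' A : Θ ∈ cocycles A := cocycles_mono (Set.subset_univ A) hΘ
    obtain ⟨z, jz, cz, hz⟩ := ih (by lia)
    rw [← cap_inter_cap] at cz hz
    obtain ⟨s, js, cs, hs⟩ := IsConnecting.exists_of_cocycle (h.isOpen_cap 1 (m + 2))
      (h.isOpen_cap (-1) (m + 2)) jz cz
    have jsΘ := cup_mem_homogeneous js hF.mem_homogeneous
    rw [add_comm] at jsΘ
    have vanish {A} (hA : IsRestrictionIso F A) (j) (hj : j ≥ d + (m + 1)) f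
        (jf : f ∈ homogeneous j) (hf : f ∈ cocycles A) : f ∈ coboundaries A :=
      hA.mem_coboundaries f hf
        (hF.mem_coboundaries j (by lia) f jf (cocycles_mono hA.subset hf))
    rw [← cap_union_cap]
    exact ⟨s, js, cs, (hs.cup (hΘ' _) (hΘ' _)).isTopClass_union (h.isOpen_cap _ _)
      (h.isOpen_cap _ _) jsΘ (cup_mem_cocycles cs (hΘ' _)) hz
      (vanish (h.isRestrictionIso_one _ hm))
      (vanish (h.isRestrictionIso_neg_one _ hm (by lia)))⟩

lemma mem_coboundaries_someCoordNeZero (h : IsSphereFibration M c F F') (hjm : j < m) (hm : m ≤ M)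
    (jf : f ∈ homogeneous j) (hf : f ∈ cocycles (someCoordNeZero c (m + 1)))
    (hF : f ∈ coboundaries F) : f ∈ coboundaries (someCoordNeZero c (m + 1)) := by
  induction j using Nat.strong_induction_on generalizing m f with | h j ih
  rw [← cap_union_cap] at hf ⊢
  have isoA := h.isRestrictionIso_one m hm
  have fA := isoA.mem_coboundaries f (cocycles_mono Set.subset_union_left hf) hF
  have fB := (h.isRestrictionIso_neg_one m hm (by lia)).mem_coboundaries f
    (cocycles_mono Set.subset_union_right hf) hF
  cases j with
  | zero =>
    exact mem_coboundaries_union_of_restrict_eq_zero (h.isOpen_cap _ _) (h.isOpen_cap _ _) hf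
      (restrict_eq_zero_of_mem_coboundaries jf fA) (restrict_eq_zero_of_mem_coboundaries jf fB)
  | succ j =>
    obtain ⟨m, rfl⟩ := Nat.exists_eq_add_one.2 (Nat.zero_lt_of_lt hjm)
    obtain ⟨y, jy, hy, hyf⟩ := IsConnecting.exists_of_mem_coboundaries jf fA fB
    rw [cap_inter_cap] at hy
    have hFE : F ⊆ someCoordNeZero c (m + 1) := by
      rw [← cap_inter_cap]
      exact Set.subset_inter isoA.subset (h.isRestrictionIso_neg_one _ hm m.succ_pos).subset
    obtain ⟨x, jx, hx, hxy⟩ := isoA.exists_homogeneous jy (cocycles_mono hFE hy)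
    have hyx : y - x ∈ coboundaries (someCoordNeZero c (m + 1)) := by
      refine ih j j.lt_succ_self (by lia) (by lia) (sub_mem jy jx) (sub_mem hy ?_)
        (mem_coboundaries_of_restrict_eq_zero (by rw [map_sub, hxy, sub_self]))
      exact cocycles_mono Set.subset_union_left hx
    rw [← cap_inter_cap] at hyx
    exact (hyf.sub_cocycle hx).mem_coboundaries (h.isOpen_cap _ _) (h.isOpen_cap _ _) hf hyx

lemma exists_cocycle_univ (h : IsSphereFibration M c F F') (hj : j + 2 ≤ M)
    (jf : f ∈ homogeneous j) (hf : f ∈ cocycles F) :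
    ∃ g ∈ homogeneous j, g ∈ cocycles Set.univ ∧ restrict F g = restrict F f := by
  obtain ⟨m, rfl⟩ := Nat.exists_eq_add_one.2 (Nat.zero_lt_of_lt hj)
  have isoA := h.isRestrictionIso_one _ le_rfl
  have isoB := h.isRestrictionIso_neg_one _ le_rfl m.succ_pos
  obtain ⟨a, ja, ca, ha⟩ := isoA.exists_homogeneous jf hf
  obtain ⟨b, jb, cb, hb⟩ := isoB.exists_homogeneous jf hf
  have hab : a - b ∈ coboundaries (cap c 1 (m + 1) ∩ cap c (-1) (m + 1)) := by
    rw [cap_inter_cap]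
    refine h.mem_coboundaries_someCoordNeZero (by lia) m.le_succ (sub_mem ja jb) ?_
      (mem_coboundaries_of_restrict_eq_zero (by rw [map_sub, ha, hb, sub_self]))
    rw [← cap_inter_cap]
    exact sub_mem (cocycles_mono Set.inter_subset_left ca)
      (cocycles_mono Set.inter_subset_right cb)
  obtain ⟨g, jg, hg, gA, -⟩ := exists_homogeneous_cocycle_of_sub_mem_coboundaries
    (h.isOpen_cap _ _) (h.isOpen_cap _ _) ja jb ca cb hab
  rw [cap_union_cap, h.someCoordNeZero_eq_univ] at hg
  exact ⟨g, jg, hg, by rw [restrict_eq_of_subset isoA.subset gA, ha]⟩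

end IsSphereFibration

end SphereFibration

section TopProduct

variable {X Y : Type*} [TopologicalSpace X] [TopologicalSpace Y] {A : Set X} {d : ℕ → ℕ} {K : ℕ}
  {f : SingularCochain X}

/-- The cohomology of `A` has classes of degrees `d 0, …, d (K - 1)` whose cup product is a top
class. -/
def HasTopProduct (A : Set X) (d : ℕ → ℕ) (K : ℕ) : Prop :=
  ∃ y : ℕ → SingularCochain X, (∀ i < K, y i ∈ homogeneous (d i)) ∧ (∀ i < K, y i ∈ cocycles A) ∧
    IsTopClass A (∑ i ∈ range K, d i) (cupProd y K)

lemma restrict_cupProd (A : Set X) (y : ℕ → SingularCochain X) (k : ℕ) :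
    restrict A (cupProd y k) = cupProd (fun i => restrict A (y i)) k :=
  pullback_cupProd _ y k

lemma restrict_cupProd_congr {y y' : ℕ → SingularCochain X} {k : ℕ}
    (h : ∀ i < k, restrict A (y i) = restrict A (y' i)) :
    restrict A (cupProd y k) = restrict A (cupProd y' k) := by
  induction k with
  | zero => rfl
  | succ k ih =>
    rw [cupProd, cupProd, restrict_cup, ih fun i hi => h i (hi.trans k.lt_succ_self),
      h k k.lt_succ_self, restrict_cup]

theorem IsSphereFibration.hasTopProduct {c : ℕ → X → ℝ} {F F' : Set X}
    (h : IsSphereFibration (d 0) c F F') (h0 : 0 < d 0) (hd : ∀ i < K, d (i + 1) + 2 ≤ d 0)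
    (hF : HasTopProduct F (fun i => d (i + 1)) K) : HasTopProduct (Set.univ : Set X) d (K + 1) := by
  obtain ⟨y', jy', hy', hΘ'⟩ := hF
  choose! y jy hy hyy' using fun i (hi : i < K) =>
    h.exists_cocycle_univ (hd i hi) (jy' i hi) (hy' i hi)
  have hΘ : IsTopClass F (∑ i ∈ range K, d (i + 1)) (cupProd y K) :=
    hΘ'.congr (cupProd_mem_homogeneous jy) (restrict_cupProd_congr hyy')
  obtain ⟨m, hm⟩ := Nat.exists_eq_add_one.2 h0
  obtain ⟨s, js, hs, hsΘ⟩ := h.exists_isTopClass_cup hm.ge (cupProd_mem_cocycles hy) hΘ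
  rw [show m + 2 = d 0 + 1 by lia, h.someCoordNeZero_eq_univ] at hs hsΘ
  rw [← hm] at js hsΘ
  refine ⟨fun | 0 => s | i + 1 => y i, ?_, ?_, ?_⟩
  · rintro (_ | i) hi
    exacts [js, jy i (by lia)]
  · rintro (_ | i) hi
    exacts [hs, hy i (by lia)]
  · rwa [sum_range_succ', cupProd_succ']

lemma hasTopProduct_univ_of_subsingleton [Subsingleton X] [Nonempty X] (d : ℕ → ℕ) :
    HasTopProduct (Set.univ : Set X) d 0 :=
  ⟨0, by simp, by simp, isTopClass_univ_unit⟩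

lemma sub_pullback_invFun_mem_coboundaries (E : X ≃ₕ Y) (hf : f ∈ cocycles Set.univ) :
    f - pullback E.toFun (pullback E.invFun f) ∈ coboundaries Set.univ :=
  pullback_sub_pullback_mem_coboundaries E.left_inv.symm hf

lemma mem_coboundaries_of_pullback (E : Y ≃ₕ X) (hf : f ∈ cocycles Set.univ)
    (h : pullback E.toFun f ∈ coboundaries Set.univ) : f ∈ coboundaries Set.univ :=
  (Submodule.sub_mem_iff_left _ (pullback_mem_coboundaries (Set.mapsTo_univ _ _) h)).1
    (sub_pullback_invFun_mem_coboundaries E.symm hf)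

lemma IsTopClass.pullback {d : ℕ} (h : IsTopClass Set.univ d f) (E : Y ≃ₕ X) :
    IsTopClass Set.univ d (pullback E.toFun f) where
  mem_homogeneous := pullback_mem_homogeneous _ h.mem_homogeneous
  mem_cocycles := pullback_mem_cocycles (Set.mapsTo_univ _ _) h.mem_cocycles
  notMem_coboundaries hf :=
    h.notMem_coboundaries (mem_coboundaries_of_pullback E h.mem_cocycles hf)
  mem_coboundaries j hj g jg hg :=
    mem_coboundaries_of_pullback E.symm hg <| h.mem_coboundaries j hj _
      (pullback_mem_homogeneous _ jg) (pullback_mem_cocycles (Set.mapsTo_univ _ _) hg)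
  exists_sub_smul g jg hg := by
    obtain ⟨c, hc⟩ := h.exists_sub_smul _ (pullback_mem_homogeneous E.invFun jg)
      (pullback_mem_cocycles (Set.mapsTo_univ _ _) hg)
    refine ⟨c, ?_⟩
    have := pullback_mem_coboundaries (φ := E.toFun) (B := Set.univ)
      (Set.mapsTo_univ _ _) hc
    rw [map_sub, map_smul] at this
    simpa only [sub_add_sub_cancel] using
      add_mem (sub_pullback_invFun_mem_coboundaries E hg) this

lemma IsTopClass.of_restrict {d : ℕ} (jf : f ∈ homogeneous d)
    (h : IsTopClass Set.univ d (SingularCochain.restrict A f)) : IsTopClass A d f where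
  mem_homogeneous := jf
  mem_cocycles := restrict_mem_cocycles_univ.1 h.mem_cocycles
  notMem_coboundaries hf := h.notMem_coboundaries (restrict_mem_coboundaries_univ.2 hf)
  mem_coboundaries j hj g jg hg :=
    restrict_mem_coboundaries_univ.1 <| h.mem_coboundaries j hj _
      (pullback_mem_homogeneous _ jg) (restrict_mem_cocycles_univ.2 hg)
  exists_sub_smul g jg hg := by
    obtain ⟨c, hc⟩ := h.exists_sub_smul _ (pullback_mem_homogeneous _ jg)
      (restrict_mem_cocycles_univ.2 hg)
    exact ⟨c, restrict_mem_coboundaries_univ.1 (by rwa [map_sub, map_smul])⟩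

lemma HasTopProduct.of_homotopyEquiv (h : HasTopProduct (Set.univ : Set X) d K) (E : Y ≃ₕ X) :
    HasTopProduct (Set.univ : Set Y) d K := by
  obtain ⟨y, jy, hy, hΘ⟩ := h
  refine ⟨fun i => pullback E.toFun (y i), fun i hi => pullback_mem_homogeneous _ (jy i hi),
    fun i hi => pullback_mem_cocycles (Set.mapsTo_univ _ _) (hy i hi), ?_⟩
  rw [← pullback_cupProd]
  exact hΘ.pullback E

lemma exists_homogeneous_restrict_eq {j : ℕ} {g : SingularCochain A} (jg : g ∈ homogeneous j) :
    ∃ f ∈ homogeneous j, restrict A f = g := by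
  obtain ⟨f, rfl⟩ := restrict_surjective A g
  exact ⟨component j f, component_mem_homogeneous j f, by
    rw [restrict_component, component_eq_self jg]⟩

lemma HasTopProduct.of_subtype (h : HasTopProduct (Set.univ : Set A) d K) :
    HasTopProduct A d K := by
  obtain ⟨y, jy, hy, hΘ⟩ := h
  choose! x jx hx using fun i (hi : i < K) => exists_homogeneous_restrict_eq (jy i hi)
  refine ⟨x, jx, fun i hi => restrict_mem_cocycles_univ.1 ?_, .of_restrict ?_ ?_⟩
  · rw [hx i hi]
    exact hy i hi
  · exact cupProd_mem_homogeneous jx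
  · refine hΘ.congr (pullback_mem_homogeneous _ (cupProd_mem_homogeneous jx)) ?_
    rw [restrict_cupProd]
    exact restrict_cupProd_congr fun i hi => congrArg _ (hx i hi)

end TopProduct

end SingularCochain

section Householder

variable {ι 𝕜 : Type*} [Fintype ι] [RCLike 𝕜] {a v : ι → 𝕜}

lemma star_sub_dotProduct_sub_self (ha : star a ⬝ᵥ a = 1) (hv : star v ⬝ᵥ v = 1) :
    star (v - a) ⬝ᵥ (v - a) = (1 - star v ⬝ᵥ a) + star (1 - star v ⬝ᵥ a) := by
  rw [star_sub, sub_dotProduct, dotProduct_sub, dotProduct_sub, ha, hv, star_sub, star_one,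
    ← Matrix.star_dotProduct]
  ring

lemma one_sub_star_dotProduct_ne_zero (ha : star a ⬝ᵥ a = 1) (hv : star v ⬝ᵥ v = 1)
    (hva : v ≠ a) : 1 - star v ⬝ᵥ a ≠ 0 := fun h => hva <| by
  rw [← sub_eq_zero, ← dotProduct_star_self_eq_zero, star_sub_dotProduct_sub_self ha hv, h,
    star_zero, add_zero]

variable [DecidableEq ι]

/-- The unitary matrix which sends the unit vector `a` to the unit vector `v ≠ a` and fixes the
orthogonal complement of `v - a`. -/
noncomputable def householder (a v : ι → 𝕜) : Matrix ι ι 𝕜 :=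
  1 - (1 - star v ⬝ᵥ a)⁻¹ • Matrix.vecMulVec (v - a) (star (v - a))

lemma householder_mulVec (a v u : ι → 𝕜) :
    householder a v *ᵥ u = u - ((1 - star v ⬝ᵥ a)⁻¹ * (star (v - a) ⬝ᵥ u)) • (v - a) := by
  rw [householder, Matrix.sub_mulVec, Matrix.one_mulVec, Matrix.smul_mulVec,
    Matrix.vecMulVec_mulVec, op_smul_eq_smul, smul_smul]

lemma householder_mulVec_self (ha : star a ⬝ᵥ a = 1) (hv : star v ⬝ᵥ v = 1) (hva : v ≠ a) :
    householder a v *ᵥ a = v := by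
  rw [householder_mulVec, star_sub, sub_dotProduct, ha, ← neg_sub 1 (star v ⬝ᵥ a), mul_neg,
    inv_mul_cancel₀ (one_sub_star_dotProduct_ne_zero ha hv hva)]
  module

lemma householder_mulVec_single {j : ι} (haj : a j = 0) (hvj : v j = 0) :
    householder a v *ᵥ Pi.single j 1 = Pi.single j 1 := by
  rw [householder_mulVec, dotProduct_single_one, Pi.star_apply, Pi.sub_apply, haj, hvj, sub_zero,
    star_zero, mul_zero, zero_smul, sub_zero]

lemma householder_mem_unitaryGroup (ha : star a ⬝ᵥ a = 1) (hv : star v ⬝ᵥ v = 1) (hva : v ≠ a) :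
    householder a v ∈ Matrix.unitaryGroup ι 𝕜 := by
  have hne := one_sub_star_dotProduct_ne_zero ha hv hva
  have hne' : star (1 - star v ⬝ᵥ a) ≠ 0 := star_ne_zero.2 hne
  have hnorm := star_sub_dotProduct_sub_self ha hv
  have hH : householder a v =
    1 - (1 - star v ⬝ᵥ a)⁻¹ • Matrix.vecMulVec (v - a) (star (v - a)) := rfl
  set r := 1 - star v ⬝ᵥ a
  set P := Matrix.vecMulVec (v - a) (star (v - a)) with hP
  have hPP : P * P = (r + star r) • P := by
    rw [hP, Matrix.vecMulVec_mul_vecMulVec, hnorm, Matrix.vecMulVec_smul]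
  have hstar : star P = P := by
    rw [hP, Matrix.star_eq_conjTranspose, Matrix.conjTranspose_vecMulVec, star_star]
  rw [Matrix.mem_unitaryGroup_iff, hH, star_sub, star_one, star_smul, hstar, mul_sub, sub_mul,
    sub_mul, one_mul, mul_one, one_mul, smul_mul_smul_comm, hPP, smul_smul, star_inv₀]
  have : r⁻¹ * (star r)⁻¹ * (r + star r) = (star r)⁻¹ + r⁻¹ := by field_simp
  rw [this]
  module

lemma continuousOn_householder (ha : star a ⬝ᵥ a = 1) :
    ContinuousOn (householder a) {v | star v ⬝ᵥ v = 1 ∧ v ≠ a} := by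
  refine ContinuousOn.fun_sub continuousOn_const (.fun_smul (.fun_inv₀ ?_ ?_) ?_)
  · exact Continuous.continuousOn (by fun_prop)
  · exact fun v hv => one_sub_star_dotProduct_ne_zero ha hv.1 hv.2
  · exact Continuous.continuousOn (Continuous.matrix_vecMulVec (by fun_prop) (by fun_prop))

end Householder

section UnitVector

variable {ι : Type*} [Fintype ι] {v : ι → ℂ}

/-- The Euclidean normalisation of a vector of coordinates, on which the default norm is the
supremum norm. -/
noncomputable def unitVector (v : ι → ℂ) : ι → ℂ := ‖WithLp.toLp 2 v‖⁻¹ • v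

lemma norm_toLp_pos (hv : v ≠ 0) : 0 < ‖WithLp.toLp 2 v‖ :=
  norm_pos_iff.2 fun h => hv (congrArg WithLp.ofLp h)

lemma star_dotProduct_self (v : ι → ℂ) : star v ⬝ᵥ v = ((‖WithLp.toLp 2 v‖ ^ 2 : ℝ) : ℂ) := by
  rw [dotProduct_comm, ← EuclideanSpace.inner_toLp_toLp, inner_self_eq_norm_sq_to_K]
  norm_cast

lemma star_unitVector_dotProduct_self (hv : v ≠ 0) : star (unitVector v) ⬝ᵥ unitVector v = 1 := by
  rw [star_dotProduct_self, unitVector, WithLp.toLp_smul, norm_smul, norm_inv, norm_norm,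
    inv_mul_cancel₀ (norm_toLp_pos hv).ne', one_pow, Complex.ofReal_one]

lemma unitVector_of_star_dotProduct_self (hv : star v ⬝ᵥ v = 1) : unitVector v = v := by
  rw [star_dotProduct_self, Complex.ofReal_eq_one,
    pow_eq_one_iff_of_nonneg (norm_nonneg _) two_ne_zero] at hv
  rw [unitVector, hv, inv_one, one_smul]

lemma continuousOn_unitVector : ContinuousOn (unitVector : (ι → ℂ) → ι → ℂ) {v | v ≠ 0} :=
  ContinuousOn.smul (ContinuousOn.inv₀ (Continuous.continuousOn (by fun_prop)) fun _ hv =>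
    (norm_toLp_pos hv).ne') continuousOn_id

end UnitVector

section TailUnitary

variable {n k : ℕ} {T g : Matrix (Fin n) (Fin n) ℂ}

/-- The unitary matrices which fix the basis vectors with indices `j ≥ k`, i.e. the standard copy
of `U(k)` in `U(n)`. -/
def tailUnitary (n k : ℕ) : Submonoid (Matrix (Fin n) (Fin n) ℂ) where
  carrier := {g | g ∈ Matrix.unitaryGroup (Fin n) ℂ ∧
    ∀ j : Fin n, k ≤ j → g *ᵥ Pi.single j 1 = Pi.single j 1}
  one_mem' := ⟨one_mem _, fun _ _ => Matrix.one_mulVec _⟩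
  mul_mem' hg hh := ⟨mul_mem hg.1 hh.1, fun j hj => by
    rw [← Matrix.mulVec_mulVec, hh.2 j hj, hg.2 j hj]⟩

/-- The standard copy of `SU(k)` in `SU(n)`. -/
def tailSpecialUnitary (n k : ℕ) : Set (Matrix (Fin n) (Fin n) ℂ) :=
  {g ∈ tailUnitary n k | g.det = 1}

lemma star_mem_tailUnitary (hg : g ∈ tailUnitary n k) : star g ∈ tailUnitary n k :=
  ⟨Unitary.star_mem hg.1, fun j hj => by
    conv_lhs => rw [← hg.2 j hj, Matrix.mulVec_mulVec, Matrix.mem_unitaryGroup_iff'.1 hg.1,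
      Matrix.one_mulVec]⟩

lemma star_mulVec_dotProduct_mulVec {ι : Type*} [Fintype ι] [DecidableEq ι] {T : Matrix ι ι ℂ}
    (hT : T ∈ Matrix.unitaryGroup ι ℂ) (v w : ι → ℂ) :
    star (T *ᵥ v) ⬝ᵥ (T *ᵥ w) = star v ⬝ᵥ w := by
  rw [Matrix.star_mulVec, Matrix.dotProduct_mulVec, Matrix.vecMul_vecMul,
    ← Matrix.star_eq_conjTranspose, Matrix.mem_unitaryGroup_iff'.1 hT, Matrix.vecMul_one]

lemma mulVec_single_apply_eq_zero (hg : g ∈ tailUnitary n k) {i j : Fin n} (hi : k ≤ i)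
    (hij : j ≠ i) : (g *ᵥ Pi.single j 1) i = 0 := by
  have := star_mulVec_dotProduct_mulVec hg.1 (Pi.single i 1) (Pi.single j 1)
  rw [hg.2 i hi] at this
  simpa [hij.symm] using this

lemma tailSpecialUnitary_self (n : ℕ) :
    tailSpecialUnitary n n = (Matrix.specialUnitaryGroup (Fin n) ℂ : Set _) := by
  ext g
  rw [SetLike.mem_coe, Matrix.mem_specialUnitaryGroup_iff]
  exact and_congr_left' ⟨And.left, fun hg => ⟨hg, fun j hj => (j.2.not_ge hj).elim⟩⟩

lemma diagonal_mulSingle_mulVec_single [NeZero n] (c : ℂ) {j : Fin n} (hj : j ≠ 0) :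
    Matrix.diagonal (Pi.mulSingle 0 c) *ᵥ Pi.single j 1 = Pi.single j 1 := by
  rw [Matrix.diagonal_mulVec_single, Pi.mulSingle_eq_of_ne hj, one_mul]

lemma tailSpecialUnitary_one [NeZero n] : tailSpecialUnitary n 1 = {1} := by
  refine Set.eq_singleton_iff_unique_mem.2 ⟨⟨one_mem _, Matrix.det_one⟩, fun g hg => ?_⟩
  have hdiag : g = Matrix.diagonal (Pi.mulSingle 0 (g 0 0)) := by
    refine Matrix.ext_of_mulVec_single fun j => ?_
    obtain rfl | hj := eq_or_ne j 0
    · rw [Matrix.diagonal_mulVec_single, Pi.mulSingle_eq_same, mul_one]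
      refine funext fun i => ?_
      obtain rfl | hi := eq_or_ne i 0
      · rw [Matrix.mulVec_single_one, Matrix.col_apply, Pi.single_eq_same]
      · rw [mulVec_single_apply_eq_zero hg.1 (Nat.one_le_iff_ne_zero.2 (Fin.val_ne_zero_iff.2 hi))
          hi.symm, Pi.single_eq_of_ne hi]
    · rw [diagonal_mulSingle_mulVec_single _ hj,
        hg.1.2 j (Nat.one_le_iff_ne_zero.2 (Fin.val_ne_zero_iff.2 hj))]
  have hdet := hg.2
  rw [hdiag, Matrix.det_diagonal, Fintype.prod_pi_mulSingle'] at hdet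
  rw [hdiag, hdet, Pi.mulSingle_one]
  exact Matrix.diagonal_one

section DetCorrect

variable [NeZero n] {κ : Fin n}

/-- Left multiplication by a unitary matrix `T`, made to preserve the determinant by rescaling the
column with index `0`. -/
def detCorrectedMul (T g : Matrix (Fin n) (Fin n) ℂ) : Matrix (Fin n) (Fin n) ℂ :=
  T * g * Matrix.diagonal (Pi.mulSingle 0 (star T.det))

lemma diagonal_mulSingle_mem_tailUnitary {c : ℂ} (hc : c ∈ unitary ℂ) (hk : 0 < k) :
    Matrix.diagonal (Pi.mulSingle 0 c) ∈ tailUnitary n k := by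
  refine ⟨?_, fun j hj => diagonal_mulSingle_mulVec_single c ?_⟩
  · rw [Matrix.mem_unitaryGroup_iff, Matrix.star_eq_conjTranspose, Matrix.diagonal_conjTranspose,
      Matrix.diagonal_mul_diagonal, ← Matrix.diagonal_one]
    congr with i
    obtain rfl | hi := eq_or_ne i 0
    · rw [Pi.star_apply, Pi.mulSingle_eq_same, Unitary.mul_star_self_of_mem hc]
    · rw [Pi.star_apply, Pi.mulSingle_eq_of_ne hi, star_one, mul_one]
  · rintro rfl
    exact hk.not_ge hj

lemma detCorrectedMul_mem (hT : T ∈ tailUnitary n k) (hg : g ∈ tailSpecialUnitary n k)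
    (hk : 0 < k) : detCorrectedMul T g ∈ tailSpecialUnitary n k := by
  have hdet := Matrix.det_of_mem_unitary hT.1
  refine ⟨mul_mem (mul_mem hT hg.1)
    (diagonal_mulSingle_mem_tailUnitary (Unitary.star_mem hdet) hk), ?_⟩
  rw [detCorrectedMul, Matrix.det_mul, Matrix.det_mul, hg.2, mul_one, Matrix.det_diagonal,
    Fintype.prod_pi_mulSingle', Unitary.mul_star_self_of_mem hdet]

lemma detCorrectedMul_one (g : Matrix (Fin n) (Fin n) ℂ) : detCorrectedMul 1 g = g := by
  rw [detCorrectedMul, Matrix.det_one, star_one, Pi.mulSingle_one, one_mul]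
  exact (congrArg _ Matrix.diagonal_one).trans (mul_one g)

lemma detCorrectedMul_mulVec_single (T g : Matrix (Fin n) (Fin n) ℂ) (hκ : κ ≠ 0) :
    detCorrectedMul T g *ᵥ Pi.single κ 1 = T *ᵥ (g *ᵥ Pi.single κ 1) := by
  rw [detCorrectedMul, ← Matrix.mulVec_mulVec, diagonal_mulSingle_mulVec_single _ hκ,
    ← Matrix.mulVec_mulVec]

lemma continuous_detCorrectedMul :
    Continuous fun p : Matrix (Fin n) (Fin n) ℂ × Matrix (Fin n) (Fin n) ℂ =>
      detCorrectedMul p.1 p.2 := by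
  refine (continuous_fst.mul continuous_snd).mul (Continuous.matrix_diagonal ?_)
  exact (continuous_mulSingle 0).comp continuous_fst.matrix_det.star

end DetCorrect

end TailUnitary

section PuncturedCone

variable {n : ℕ} {κ : Fin n} {a v : Fin n → ℂ} {B : Set (Fin n → ℂ)}

/-- `B` is a contractible cone without apex in the span of the basis vectors with indices `≤ κ`,
which misses the unit vector `a` of that span. -/
structure IsPuncturedCone (κ : Fin n) (a : Fin n → ℂ) (B : Set (Fin n → ℂ)) : Prop where
  contractibleSpace : ContractibleSpace B
  smul_mem : ∀ r : ℝ, 0 < r → ∀ v ∈ B, r • v ∈ B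
  zero_notMem : 0 ∉ B
  apply_eq_zero : ∀ v ∈ B, ∀ j > κ, v j = 0
  star_dotProduct_self : star a ⬝ᵥ a = 1
  notMem : a ∉ B
  pole_apply_eq_zero : ∀ j > κ, a j = 0

/-- A unitary matrix sending `a` to the direction of `v`. -/
noncomputable def frame (a v : Fin n → ℂ) : Matrix (Fin n) (Fin n) ℂ := householder a (unitVector v)

namespace IsPuncturedCone

lemma ne_zero (hB : IsPuncturedCone κ a B) (hv : v ∈ B) : v ≠ 0 :=
  ne_of_mem_of_not_mem hv hB.zero_notMem

lemma unitVector_mem (hB : IsPuncturedCone κ a B) (hv : v ∈ B) : unitVector v ∈ B :=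
  hB.smul_mem _ (inv_pos.2 (norm_toLp_pos (hB.ne_zero hv))) v hv

lemma unitVector_ne (hB : IsPuncturedCone κ a B) (hv : v ∈ B) : unitVector v ≠ a :=
  ne_of_mem_of_not_mem (hB.unitVector_mem hv) hB.notMem

lemma frame_mulVec (hB : IsPuncturedCone κ a B) (hv : v ∈ B) : frame a v *ᵥ a = unitVector v :=
  householder_mulVec_self hB.star_dotProduct_self
    (star_unitVector_dotProduct_self (hB.ne_zero hv)) (hB.unitVector_ne hv)

lemma frame_mem_tailUnitary (hB : IsPuncturedCone κ a B) (hv : v ∈ B) :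
    frame a v ∈ tailUnitary n (κ + 1) :=
  ⟨householder_mem_unitaryGroup hB.star_dotProduct_self
    (star_unitVector_dotProduct_self (hB.ne_zero hv)) (hB.unitVector_ne hv), fun j hj =>
    householder_mulVec_single (hB.pole_apply_eq_zero j hj)
      (hB.apply_eq_zero _ (hB.unitVector_mem hv) j hj)⟩

lemma star_frame_mulVec_unitVector (hB : IsPuncturedCone κ a B) (hv : v ∈ B) :
    star (frame a v) *ᵥ unitVector v = a := by
  rw [← hB.frame_mulVec hv, Matrix.mulVec_mulVec,
    Matrix.mem_unitaryGroup_iff'.1 (hB.frame_mem_tailUnitary hv).1, Matrix.one_mulVec]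

lemma continuousOn_frame (hB : IsPuncturedCone κ a B) : ContinuousOn (frame a) B :=
  (continuousOn_householder hB.star_dotProduct_self).comp
    (continuousOn_unitVector.mono fun _ hv => hB.ne_zero hv) fun _ hv =>
      ⟨star_unitVector_dotProduct_self (hB.ne_zero hv), hB.unitVector_ne hv⟩

end IsPuncturedCone

end PuncturedCone

lemma star_mulVec_single_dotProduct_self {n : ℕ} {g : Matrix (Fin n) (Fin n) ℂ}
    (hg : g ∈ Matrix.unitaryGroup (Fin n) ℂ) (κ : Fin n) :
    star (g *ᵥ Pi.single κ 1) ⬝ᵥ (g *ᵥ Pi.single κ 1) = 1 := by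
  rw [star_mulVec_dotProduct_mulVec hg, dotProduct_single_one, Pi.star_apply, Pi.single_eq_same,
    star_one]

lemma homotopic_id_const {X : Type*} [TopologicalSpace X] [ContractibleSpace X] (x : X) :
    (ContinuousMap.id X).Homotopic (ContinuousMap.const X x) := by
  obtain ⟨y, hy⟩ := id_nullhomotopic X
  have : Nonempty X := ⟨x⟩
  exact hy.trans (ContinuousMap.homotopic_const_iff.2 (PathConnectedSpace.joined y x))

section MoveColumn

variable {n : ℕ} [NeZero n] {κ : Fin n} {a u e : Fin n → ℂ} {B : Set (Fin n → ℂ)}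
  {g : Matrix (Fin n) (Fin n) ℂ}

/-- The matrix `g`, moved so that its column `κ` becomes the direction of `u`; the vector `a` is the
one which neither `u` nor the old column is a multiple of. -/
noncomputable def moveColumn (κ : Fin n) (a u : Fin n → ℂ) (g : Matrix (Fin n) (Fin n) ℂ) :
    Matrix (Fin n) (Fin n) ℂ :=
  detCorrectedMul (frame a u * star (frame a (g *ᵥ Pi.single κ 1))) g

namespace IsPuncturedCone

lemma moveColumn_mem (hB : IsPuncturedCone κ a B) (hu : u ∈ B) (hgB : g *ᵥ Pi.single κ 1 ∈ B)
    (hg : g ∈ tailSpecialUnitary n (κ + 1)) : moveColumn κ a u g ∈ tailSpecialUnitary n (κ + 1) :=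
  detCorrectedMul_mem (mul_mem (hB.frame_mem_tailUnitary hu)
    (star_mem_tailUnitary (hB.frame_mem_tailUnitary hgB))) hg κ.1.succ_pos

lemma moveColumn_mulVec_single (hB : IsPuncturedCone κ a B) (hκ : κ ≠ 0) (hu : u ∈ B)
    (hgB : g *ᵥ Pi.single κ 1 ∈ B) (hg : g ∈ Matrix.unitaryGroup (Fin n) ℂ) :
    moveColumn κ a u g *ᵥ Pi.single κ 1 = unitVector u := by
  have := hB.star_frame_mulVec_unitVector hgB
  rw [unitVector_of_star_dotProduct_self (star_mulVec_single_dotProduct_self hg κ)] at this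
  rw [moveColumn, detCorrectedMul_mulVec_single _ _ hκ, ← Matrix.mulVec_mulVec, this,
    hB.frame_mulVec hu]

lemma moveColumn_self (hB : IsPuncturedCone κ a B) (hgB : g *ᵥ Pi.single κ 1 ∈ B) :
    moveColumn κ a (g *ᵥ Pi.single κ 1) g = g := by
  rw [moveColumn, Matrix.mem_unitaryGroup_iff.1 (hB.frame_mem_tailUnitary hgB).1,
    detCorrectedMul_one]

lemma continuousOn_moveColumn (hB : IsPuncturedCone κ a B) :
    ContinuousOn (fun p : (Fin n → ℂ) × Matrix (Fin n) (Fin n) ℂ => moveColumn κ a p.1 p.2)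
      {p | p.1 ∈ B ∧ p.2 *ᵥ Pi.single κ 1 ∈ B} := by
  have hcol : Continuous fun p : (Fin n → ℂ) × Matrix (Fin n) (Fin n) ℂ =>
      p.2 *ᵥ Pi.single κ 1 := by fun_prop
  set S := {p : (Fin n → ℂ) × Matrix (Fin n) (Fin n) ℂ | p.1 ∈ B ∧ p.2 *ᵥ Pi.single κ 1 ∈ B}
  have hnew : ContinuousOn (fun p => frame a p.1) S :=
    hB.continuousOn_frame.comp continuousOn_fst fun _ hp => hp.1
  have hold : ContinuousOn (fun p => frame a (p.2 *ᵥ Pi.single κ 1)) S :=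
    hB.continuousOn_frame.comp hcol.continuousOn fun _ hp => hp.2
  have := continuous_detCorrectedMul.comp_continuousOn
    ((hnew.mul hold.star).prodMk continuousOn_snd)
  exact this

lemma isRestrictionIso (hB : IsPuncturedCone κ a B) (hκ : κ ≠ 0) (he : e ∈ B)
    (he1 : star e ⬝ᵥ e = 1) :
    SingularCochain.IsRestrictionIso
      {g : tailSpecialUnitary n (κ + 1) | g.1 *ᵥ Pi.single κ 1 = e}
      {g | g.1 *ᵥ Pi.single κ 1 ∈ B} := by
  have := hB.contractibleSpace
  set A : Set (tailSpecialUnitary n (κ + 1)) := {g | g.1 *ᵥ Pi.single κ 1 ∈ B}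
  let col : C(A, B) := ⟨fun g => ⟨g.1.1 *ᵥ Pi.single κ 1, g.2⟩, by fun_prop⟩
  have hcol (u : B) (g : A) : moveColumn κ a u g.1.1 *ᵥ Pi.single κ 1 = unitVector u :=
    hB.moveColumn_mulVec_single hκ u.2 g.2 g.1.2.1.1
  have hcont : Continuous fun p : B × A => moveColumn κ a p.1.1 p.2.1.1 :=
    hB.continuousOn_moveColumn.comp_continuous
      (f := fun p : B × A => (p.1.1, p.2.1.1)) (by fun_prop) fun p => ⟨p.1.2, p.2.2⟩
  let move : C(B × A, A) :=
    { toFun p := ⟨⟨moveColumn κ a p.1 p.2.1.1, hB.moveColumn_mem p.1.2 p.2.2 p.2.1.2⟩,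
        Set.mem_of_eq_of_mem (s := B) (hcol p.1 p.2) (hB.unitVector_mem p.1.2)⟩
      continuous_toFun := (hcont.subtype_mk _).subtype_mk _ }
  have hmove : move.comp (col.prodMk (.id A)) = .id A :=
    ContinuousMap.ext fun g => Subtype.ext (Subtype.ext (hB.moveColumn_self g.2))
  have hhom : (ContinuousMap.id A).Homotopic
      (move.comp (.prodMk (.const A ⟨e, he⟩) (.id A))) := by
    have hconst := (homotopic_id_const (⟨e, he⟩ : B)).comp (.refl col)
    have := ContinuousMap.Homotopic.comp (.refl move) (hconst.prodMk (.refl (.id A)))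
    rwa [ContinuousMap.id_comp, hmove] at this
  refine .of_homotopic (fun g hg => Set.mem_of_eq_of_mem (s := B) hg he) hhom (fun g => ?_)
    fun g hg => ?_
  · exact (hcol ⟨e, he⟩ g).trans (unitVector_of_star_dotProduct_self he1)
  · have hge : (⟨e, he⟩ : B) = col g := Subtype.ext (Eq.symm hg)
    exact (congrArg (fun u => move (u, g)) hge).trans (DFunLike.congr_fun hmove g)

end IsPuncturedCone

end MoveColumn

namespace SingularCochain

section LinearCap

variable {E : Type*} [AddCommGroup E] [Module ℝ E] {c : ℕ → E →ₗ[ℝ] ℝ} {s : ℝ} {m : ℕ} {e v : E}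

lemma mem_cap_coe : v ∈ cap (fun i => c i) s m ↔ (∃ i < m, c i v ≠ 0) ∨ 0 < s * c m v := Iff.rfl

lemma zero_notMem_cap : 0 ∉ cap (fun i => c i) s m := by
  simp [mem_cap_coe]

lemma smul_mem_cap {r : ℝ} (hr : 0 < r) (hv : v ∈ cap (fun i => c i) s m) :
    r • v ∈ cap (fun i => c i) s m := by
  rw [mem_cap_coe] at hv ⊢
  simp only [map_smul, smul_eq_mul, mul_left_comm s]
  exact hv.imp (fun ⟨i, hi, hiv⟩ => ⟨i, hi, mul_ne_zero hr.ne' hiv⟩) (mul_pos hr)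

lemma smul_mem_cap_of_dual (hs : s ≠ 0) (he1 : c m e = 1) : s • e ∈ cap (fun i => c i) s m := by
  rw [mem_cap_coe, map_smul, he1, smul_eq_mul, mul_one]
  exact Or.inr (mul_self_pos.2 hs)

lemma neg_smul_notMem_cap (he : ∀ i < m, c i e = 0) (he1 : c m e = 1) :
    -(s • e) ∉ cap (fun i => c i) s m := by
  rw [mem_cap_coe, map_neg, map_smul, he1, smul_eq_mul, mul_one, mul_neg]
  rintro (⟨i, hi, h⟩ | h)
  · rw [map_neg, map_smul, he i hi, smul_zero, neg_zero] at h
    exact h rfl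
  · exact (neg_pos.1 h).not_ge (mul_self_nonneg s)

lemma starConvex_cap (hs : s ≠ 0) (he : ∀ i < m, c i e = 0) (he1 : c m e = 1) :
    StarConvex ℝ (s • e) (cap (fun i => c i) s m) := by
  rintro v hv a b ha hb hab
  obtain rfl | hb := hb.eq_or_lt
  · rw [zero_smul, add_zero, (add_zero a).symm.trans hab, one_smul]
    exact smul_mem_cap_of_dual hs he1
  have hbv := smul_mem_cap hb hv
  rw [mem_cap_coe] at hbv ⊢
  obtain ⟨i, hi, hiv⟩ | hbv := hbv
  · refine Or.inl ⟨i, hi, ?_⟩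
    rwa [map_add, map_smul, map_smul, he i hi, smul_zero, smul_zero, zero_add]
  · refine Or.inr ?_
    rw [map_add, map_smul, map_smul, he1, mul_add]
    refine add_pos_of_nonneg_of_pos ?_ hbv
    rw [smul_eq_mul, smul_eq_mul, mul_one, mul_left_comm]
    exact mul_nonneg ha (mul_self_nonneg s)

end LinearCap

end SingularCochain

section RealCoordinates

variable {n : ℕ} {κ : Fin n} {v : Fin n → ℂ} {i m : ℕ} {s : ℝ}

/-- The index of the complex coordinate to which the `i`-th real coordinate belongs, when the
coordinates with indices `≤ κ` are enumerated downwards from `κ`. It is `0` for all `i ≥ 2 * κ`. -/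
def coordIndex (κ : Fin n) (i : ℕ) : Fin n := ⟨κ - i / 2, (Nat.sub_le _ _).trans_lt κ.2⟩

/-- The real coordinates on the span of the basis vectors with indices `≤ κ`, in the order
`re v_κ, im v_κ, re v_{κ-1}, …`. -/
noncomputable def realCoord (κ : Fin n) (i : ℕ) : (Fin n → ℂ) →L[ℝ] ℝ :=
  (if Even i then Complex.reCLM else Complex.imCLM) ∘L .proj (coordIndex κ i)

/-- The real basis dual to `realCoord`. -/
noncomputable def realBasisVec (κ : Fin n) (m : ℕ) : Fin n → ℂ :=
  Pi.single (coordIndex κ m) (if Even m then 1 else Complex.I)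

lemma realCoord_of_even (hi : Even i) (v : Fin n → ℂ) :
    realCoord κ i v = (v (coordIndex κ i)).re := by
  simp [realCoord, hi]

lemma realCoord_of_odd (hi : ¬Even i) (v : Fin n → ℂ) :
    realCoord κ i v = (v (coordIndex κ i)).im := by
  simp [realCoord, hi]

lemma realCoord_realBasisVec_self (κ : Fin n) (m : ℕ) : realCoord κ m (realBasisVec κ m) = 1 := by
  by_cases hm : Even m
  · rw [realCoord_of_even hm, realBasisVec, Pi.single_eq_same, if_pos hm, Complex.one_re]
  · rw [realCoord_of_odd hm, realBasisVec, Pi.single_eq_same, if_neg hm, Complex.I_im]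

lemma realCoord_realBasisVec_of_lt (hi : i < m) (hm : m ≤ 2 * κ + 1) :
    realCoord κ i (realBasisVec κ m) = 0 := by
  by_cases h : coordIndex κ i = coordIndex κ m
  · have hi' : Even i ∧ ¬Even m := by
      have := congrArg Fin.val h
      simp only [coordIndex] at this
      grind
    rw [realCoord_of_even hi'.1, realBasisVec, h, Pi.single_eq_same, if_neg hi'.2, Complex.I_re]
  · have : realBasisVec κ m (coordIndex κ i) = 0 := Pi.single_eq_of_ne h _
    by_cases hi' : Even i
    · rw [realCoord_of_even hi', this, Complex.zero_re]
    · rw [realCoord_of_odd hi', this, Complex.zero_im]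

lemma realBasisVec_apply_eq_zero {j : Fin n} (hj : κ < j) : realBasisVec κ m j = 0 :=
  Pi.single_eq_of_ne (Fin.ne_of_gt (lt_of_le_of_lt (Nat.sub_le _ _) (Fin.lt_def.1 hj))) _

lemma star_realBasisVec_dotProduct_self (κ : Fin n) (m : ℕ) :
    star (realBasisVec κ m) ⬝ᵥ realBasisVec κ m = 1 := by
  rw [realBasisVec, dotProduct_single, Pi.star_apply, Pi.single_eq_same]
  split_ifs <;> simp

lemma realBasisVec_zero (κ : Fin n) : realBasisVec κ 0 = Pi.single κ 1 := by
  simp [realBasisVec, coordIndex]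

lemma exists_realCoord_ne_zero (hv : v ≠ 0) (hvκ : ∀ j > κ, v j = 0) :
    ∃ i ≤ 2 * (κ : ℕ) + 1, realCoord κ i v ≠ 0 := by
  obtain ⟨j, hj⟩ := Function.ne_iff.1 hv
  have hjκ : j ≤ κ := le_of_not_gt fun h => hj (hvκ j h)
  have hidx (i : ℕ) (hi : i / 2 = κ - j) : coordIndex κ i = j := by
    refine Fin.ext ?_
    simp only [coordIndex, hi]
    lia
  by_cases hre : (v j).re = 0
  · refine ⟨2 * (κ - j) + 1, by lia, ?_⟩
    rw [realCoord_of_odd (by grind), hidx _ (by lia)]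
    exact fun him => hj (Complex.ext hre him)
  · refine ⟨2 * (κ - j), by lia, ?_⟩
    rwa [realCoord_of_even (even_two_mul _), hidx _ (by lia)]

lemma isPuncturedCone_cap (hs : s * s = 1) (hm : m ≤ 2 * κ + 1) :
    IsPuncturedCone κ (-(s • realBasisVec κ m))
      ({v | ∀ j > κ, v j = 0} ∩ SingularCochain.cap (fun i => realCoord κ i) s m) := by
  have hs0 : s ≠ 0 := left_ne_zero_of_mul_eq_one hs
  have hlt (i) (hi : i < m) := realCoord_realBasisVec_of_lt hi hm
  have hself := realCoord_realBasisVec_self κ m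
  have hsupp : ∀ j > κ, (s • realBasisVec κ m) j = 0 := fun j hj => by
    rw [Pi.smul_apply, realBasisVec_apply_eq_zero hj, smul_zero]
  let c (i : ℕ) : (Fin n → ℂ) →ₗ[ℝ] ℝ := realCoord κ i
  refine ⟨?_, fun r hr v hv => ⟨fun j hj => ?_, ?_⟩, fun h => ?_, fun v hv => hv.1, ?_, fun h => ?_,
    fun j hj => ?_⟩
  · refine StarConvex.contractibleSpace (x := s • realBasisVec κ m) ?_ ⟨_, hsupp, ?_⟩
    · refine .inter (fun v hv a b _ _ _ j hj => ?_)
        (SingularCochain.starConvex_cap (c := c) hs0 hlt hself)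
      rw [Pi.add_apply, Pi.smul_apply a, Pi.smul_apply b, hsupp j hj, hv j hj, smul_zero,
        smul_zero, add_zero]
    · exact SingularCochain.smul_mem_cap_of_dual (c := c) hs0 hself
  · rw [Pi.smul_apply, hv.1 j hj, smul_zero]
  · exact SingularCochain.smul_mem_cap (c := c) hr hv.2
  · exact SingularCochain.zero_notMem_cap (c := c) h.2
  · rw [star_neg, neg_dotProduct_neg, star_smul, smul_dotProduct, dotProduct_smul, smul_smul,
      star_realBasisVec_dotProduct_self, star_trivial, hs, one_smul]
  · exact SingularCochain.neg_smul_notMem_cap (c := c) hlt hself h.2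
  · rw [Pi.neg_apply, hsupp j hj, neg_zero]

end RealCoordinates

section SpecialUnitary

variable {n : ℕ} {κ : Fin n} {m : ℕ} {s : ℝ} {e : Fin n → ℂ}

/-- The real coordinates of the column `κ`, as functions on the copy of `SU(κ + 1)` in `SU(n)`. -/
noncomputable def columnCoord (κ : Fin n) (i : ℕ) (g : tailSpecialUnitary n (κ + 1)) : ℝ :=
  realCoord κ i (g.1 *ᵥ Pi.single κ 1)

lemma column_apply_eq_zero (g : tailSpecialUnitary n (κ + 1)) {j : Fin n} (hj : j > κ) :
    (g.1 *ᵥ Pi.single κ 1) j = 0 :=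
  mulVec_single_apply_eq_zero g.2.1 hj (ne_of_lt hj)

lemma isRestrictionIso_cap_columnCoord [NeZero n] (hκ : κ ≠ 0) (hs : s * s = 1)
    (hm : m ≤ 2 * κ + 1) (he : e ∈ SingularCochain.cap (fun i => realCoord κ i) s m)
    (he0 : ∀ j > κ, e j = 0) (he1 : star e ⬝ᵥ e = 1) :
    SingularCochain.IsRestrictionIso
      {g : tailSpecialUnitary n (κ + 1) | g.1 *ᵥ Pi.single κ 1 = e}
      (SingularCochain.cap (columnCoord κ) s m) := by
  have := (isPuncturedCone_cap hs hm).isRestrictionIso hκ ⟨he0, he⟩ he1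
  convert this using 1
  ext g
  exact (and_iff_right fun j => column_apply_eq_zero g).symm

lemma isSphereFibration_columnCoord [NeZero n] (hκ : κ ≠ 0) :
    SingularCochain.IsSphereFibration (2 * κ + 1) (columnCoord κ)
      {g | g.1 *ᵥ Pi.single κ 1 = Pi.single κ 1} {g | g.1 *ᵥ Pi.single κ 1 = -Pi.single κ 1} := by
  have h0 := realCoord_realBasisVec_self κ 0
  have hself := star_realBasisVec_dotProduct_self κ 0
  rw [← realBasisVec_zero]
  have hsupp : ∀ j > κ, realBasisVec κ 0 j = 0 := fun j => realBasisVec_apply_eq_zero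
  have hsupp' : ∀ j > κ, (-realBasisVec κ 0) j = 0 := fun j hj => neg_eq_zero.2 (hsupp j hj)
  have hself' : star (-realBasisVec κ 0) ⬝ᵥ (-realBasisVec κ 0) = 1 := by
    rw [star_neg, neg_dotProduct_neg, hself]
  have hneg : realCoord κ 0 (-realBasisVec κ 0) = -1 := by rw [map_neg, h0]
  have h0' : realCoord κ 0 (realBasisVec κ 0) ≠ 0 := h0.trans_ne one_ne_zero
  have hneg' : realCoord κ 0 (-realBasisVec κ 0) ≠ 0 := by norm_num [hneg]
  constructor
  · exact fun i => (realCoord κ i).continuous.comp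
      (continuous_subtype_val.matrix_mulVec continuous_const)
  · refine fun g => exists_realCoord_ne_zero (fun h => ?_) fun j => column_apply_eq_zero g
    have := star_mulVec_single_dotProduct_self g.2.1.1 κ
    rw [h, dotProduct_zero] at this
    exact zero_ne_one this
  · refine fun m hm => isRestrictionIso_cap_columnCoord hκ (one_mul 1) hm ?_ hsupp hself
    obtain rfl | hm0 := m.eq_zero_or_pos
    · exact Or.inr (by norm_num [h0])
    · exact Or.inl ⟨0, hm0, h0'⟩
  · exact fun m hm hm0 => isRestrictionIso_cap_columnCoord hκ (by norm_num) hm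
      (Or.inl ⟨0, hm0, h0'⟩) hsupp hself
  · exact isRestrictionIso_cap_columnCoord hκ (one_mul 1) (by lia)
      (Or.inl ⟨0, one_pos, hneg'⟩) hsupp' hself'
  · exact isRestrictionIso_cap_columnCoord hκ (by norm_num) (by lia)
      (Or.inr (by norm_num [hneg])) hsupp' hself'

lemma image_val_stabilizer_single (κ : Fin n) :
    Subtype.val '' {g : tailSpecialUnitary n (κ + 1) | g.1 *ᵥ Pi.single κ 1 = Pi.single κ 1} =
      tailSpecialUnitary n κ := by
  ext g
  constructor
  · rintro ⟨g, hg, rfl⟩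
    refine ⟨⟨g.2.1.1, fun j hj => ?_⟩, g.2.2⟩
    obtain rfl | hj := Fin.eq_or_lt_of_le hj
    · exact hg
    · exact g.2.1.2 j hj
  · rintro ⟨⟨hg, hfix⟩, hdet⟩
    exact ⟨⟨g, ⟨hg, fun j hj => hfix j (by lia)⟩, hdet⟩, hfix κ le_rfl, rfl⟩

lemma hasTopProduct_tailSpecialUnitary {k : ℕ} (hk : k < n) :
    SingularCochain.HasTopProduct (Set.univ : Set (tailSpecialUnitary n (k + 1)))
      (fun i => 2 * (k - i) + 1) k := by
  have : NeZero n := ⟨by lia⟩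
  induction k with
  | zero =>
    have : Subsingleton (tailSpecialUnitary n (0 + 1)) := by
      rw [zero_add, tailSpecialUnitary_one]
      infer_instance
    have : Nonempty (tailSpecialUnitary n (0 + 1)) := ⟨⟨1, one_mem _, Matrix.det_one⟩⟩
    exact SingularCochain.hasTopProduct_univ_of_subsingleton _
  | succ k ih =>
    let κ : Fin n := ⟨k + 1, hk⟩
    have hfib := isSphereFibration_columnCoord (κ := κ) (Fin.ne_of_val_ne k.succ_ne_zero)
    let e := (Topology.IsEmbedding.subtypeVal.homeomorphImage _).trans
      (Homeomorph.setCongr (image_val_stabilizer_single κ))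
    have hfibre := ((ih (by lia)).of_homotopyEquiv e.toHomotopyEquiv).of_subtype
    refine hfib.hasTopProduct (d := fun i => 2 * (k + 1 - i) + 1) (by lia) (fun i _ => by lia) ?_
    simpa only [Nat.add_sub_add_right] using hfibre

lemma hasTopProduct_specialUnitaryGroup [NeZero n] :
    SingularCochain.HasTopProduct (Set.univ : Set (Matrix.specialUnitaryGroup (Fin n) ℂ))
      (fun i => 2 * (n - 1 - i) + 1) (n - 1) := by
  have h := hasTopProduct_tailSpecialUnitary (Nat.sub_one_lt (NeZero.ne n))
  rw [Nat.sub_one_add_one (NeZero.ne n)] at h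
  exact h.of_homotopyEquiv (Homeomorph.setCongr (tailSpecialUnitary_self n).symm).toHomotopyEquiv

end SpecialUnitary

namespace SingularCochain

variable {Y : Type*} [TopologicalSpace Y] {U : Finset (Set Y)} {d : ℕ → ℕ} {k n : ℕ}

lemma HasTopProduct.add_sum_sum_le_card (h : HasTopProduct (Set.univ : Set Y) d (k + 2))
    (hU : IsGoodCover U) (hd : ∀ i, d i ≠ 0) (hd' : d 1 < d 0) :
    k + 4 + ∑ j ∈ range (k + 2), ∑ i ∈ range (j + 1), d i ≤ #U := by
  obtain ⟨y, jy, hy, htop⟩ := h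
  refine SingularCochain.add_sum_sum_le_card hU subset_rfl hd hd' jy hy ?_
  rw [hU.2.1]
  exact htop.notMem_coboundaries

lemma HasTopProduct.le_six_mul_card (hn : 3 ≤ n)
    (h : HasTopProduct (Set.univ : Set Y) (fun i => 2 * (n - 1 - i) + 1) (n - 1))
    (hU : IsGoodCover U) : 4 * n ^ 3 + 5 * n + 6 ≤ 6 * #U + 3 * n ^ 2 := by
  obtain ⟨k, rfl⟩ := Nat.exists_eq_add_of_le' hn
  have hbound := h.add_sum_sum_le_card hU (fun _ => Nat.succ_ne_zero _) (by lia)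
  have hsum := six_mul_sum_sum_range_odd_degrees (le_refl (k + 2))
  change k + 4 + ∑ j ∈ range (k + 2), ∑ i ∈ range (j + 1), (2 * (k + 2 - i) + 1) ≤ #U at hbound
  linarith

end SingularCochain

/-- The covering type of the special unitary group `SU(n)` is at least `(4n³−3n²+5n+6)/6`:
every good cover of any space homotopy equivalent to `SU(n)` has at least that many
members.  (The numerator is divisible by 6, so `/` is exact.) -/
theorem stmt10 (n : ℕ) (hn : 3 ≤ n) (Y : Type*) [TopologicalSpace Y]
    (h : Nonempty (ContinuousMap.HomotopyEquiv ↥(Matrix.specialUnitaryGroup (Fin n) ℂ) Y))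
    (U : Finset (Set Y)) (hU : IsGoodCover U) :
    (4 * n ^ 3 - 3 * n ^ 2 + 5 * n + 6) / 6 ≤ U.card := by
  obtain ⟨E⟩ := h
  have : NeZero n := ⟨by lia⟩
  have hprod := hasTopProduct_specialUnitaryGroup.of_homotopyEquiv E.symm
  have hbound := hprod.le_six_mul_card hn hU
  have hpow : n ^ 2 ≤ n ^ 3 := Nat.pow_le_pow_right (by lia) (by lia)
  generalize n ^ 3 = a at *
  generalize n ^ 2 = b at *
  lia
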